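/- arXiv:0902.3037 — 2 statements merged into one kernel-verified Lean document; each statement's English description precedes it below -/
import Mathlib

section
/- Let R be a commutative noetherian local ring with residue field k, and let M be a nonzero finitely generated R-module of finite injective dimension and finite projective dimension. Then id_R R = id_R M; in particular id_R R is finite. -/
open CategoryTheory TensorProduct

/-- `pdLE R n M`: the `R`-module `M` has projective dimension at most `n`,
i.e. it admits a projective resolution of length `n`. -/
def pdLE (R : Type) [CommRing R] : ℕ → (M : Type) → (iM : AddCommGroup M) → (jM : Module R M) → Prop
  | 0, M, iM, jM => Module.Projective R M
  | n+1, M, iM, jM =>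
      ∃ (P : Type) (iP : AddCommGroup P) (jP : Module R P) (f : P →ₗ[R] M),
        Module.Projective R P ∧ Function.Surjective f ∧
          pdLE R n (LinearMap.ker f) inferInstance inferInstance

/-- `idLE R n M`: `M` has injective dimension at most `n`,
i.e. it admits an injective resolution of length `n`. -/
def idLE (R : Type) [CommRing R] : ℕ → (M : Type) → (iM : AddCommGroup M) → (jM : Module R M) → Prop
  | 0, M, iM, jM => Module.Injective R M
  | n+1, M, iM, jM =>
      ∃ (I : Type) (iI : AddCommGroup I) (jI : Module R I) (f : M →ₗ[R] I),
        Module.Injective R I ∧ Function.Injective f ∧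
          idLE R n (I ⧸ LinearMap.range f) inferInstance inferInstance

/-- The projective dimension of `M`, as an element of `ℕ∞` (`⊤` means infinite). -/
noncomputable def projDim (R : Type) [CommRing R] (M : Type) [AddCommGroup M] [Module R M] : ℕ∞ :=
  sInf {n : ℕ∞ | ∃ m : ℕ, n = m ∧ pdLE R m M inferInstance inferInstance}

/-- The injective dimension of `M`, as an element of `ℕ∞`. -/
noncomputable def injDim (R : Type) [CommRing R] (M : Type) [AddCommGroup M] [Module R M] : ℕ∞ :=
  sInf {n : ℕ∞ | ∃ m : ℕ, n = m ∧ idLE R m M inferInstance inferInstance}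

/-- A commutative noetherian (local) ring is Gorenstein if it has finite injective
dimension as a module over itself. -/
def IsGorensteinRing (R : Type) [CommRing R] : Prop :=
  ∃ n : ℕ, idLE R n R inferInstance inferInstance

/-- `extGroup R M N i` : the `i`-th Ext module `Ext^i_R(M,N)`. -/
noncomputable def extGroup (R : Type) [CommRing R] (M N : Type) [AddCommGroup M] [Module R M]
    [AddCommGroup N] [Module R N] (i : ℕ) : ModuleCat R :=
  ((Ext R (ModuleCat R) i).obj (Opposite.op (ModuleCat.of R M))).obj (ModuleCat.of R N)

/-- `torGroup R M N i` : the `i`-th Tor module `Tor_i^R(M,N)`. -/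
noncomputable def torGroup (R : Type) [CommRing R] (M N : Type) [AddCommGroup M] [Module R M]
    [AddCommGroup N] [Module R N] (i : ℕ) : ModuleCat R :=
  ((Tor (ModuleCat R) i).obj (ModuleCat.of R M)).obj (ModuleCat.of R N)

/-- `C` is a semidualizing `R`-module: it is finitely generated, the homothety map
`R → Hom_R(C,C)` is bijective, and `Ext^i_R(C,C) = 0` for all `i > 0`. -/
def IsSemidualizing (R : Type) [CommRing R] (C : Type) [AddCommGroup C] [Module R C] : Prop :=
  Module.Finite R C ∧ Function.Bijective (LinearMap.lsmul R C) ∧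
    ∀ i : ℕ, 0 < i → Subsingleton (extGroup R C C i)

/-- `CpdLE R C n M` : `M` has `C`-projective dimension at most `n`, i.e. there is an exact
sequence `0 → C⊗Pₙ → ⋯ → C⊗P₀ → M → 0` with each `Pᵢ` projective. -/
def CpdLE (R C : Type) [CommRing R] [AddCommGroup C] [Module R C] :
    ℕ → (M : Type) → (iM : AddCommGroup M) → (jM : Module R M) → Prop
  | 0, M, iM, jM =>
      ∃ (P : Type) (iP : AddCommGroup P) (jP : Module R P),
        Module.Projective R P ∧ Nonempty ((TensorProduct R C P) ≃ₗ[R] M)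
  | n+1, M, iM, jM =>
      ∃ (P : Type) (iP : AddCommGroup P) (jP : Module R P)
        (f : TensorProduct R C P →ₗ[R] M),
        Module.Projective R P ∧ Function.Surjective f ∧
          CpdLE R C n (LinearMap.ker f) inferInstance inferInstance

/-- `CidLE R C n M` : `M` has `C`-injective dimension at most `n`, i.e. there is an exact
sequence `0 → M → Hom(C,I⁰) → ⋯ → Hom(C,Iⁿ) → 0` with each `Iⁱ` injective. -/
def CidLE (R C : Type) [CommRing R] [AddCommGroup C] [Module R C] :
    ℕ → (M : Type) → (iM : AddCommGroup M) → (jM : Module R M) → Prop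
  | 0, M, iM, jM =>
      ∃ (I : Type) (iI : AddCommGroup I) (jI : Module R I),
        Module.Injective R I ∧ Nonempty (M ≃ₗ[R] (C →ₗ[R] I))
  | n+1, M, iM, jM =>
      ∃ (I : Type) (iI : AddCommGroup I) (jI : Module R I)
        (f : M →ₗ[R] (C →ₗ[R] I)),
        Module.Injective R I ∧ Function.Injective f ∧
          CidLE R C n ((C →ₗ[R] I) ⧸ LinearMap.range f) inferInstance inferInstance

/-- The depth of a module over a local ring: the supremum of lengths of `M`-regular
sequences contained in the maximal ideal. -/
noncomputable def rdepth (R : Type) [CommRing R] [IsLocalRing R]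
    (M : Type) [AddCommGroup M] [Module R M] : ℕ∞ :=
  sSup {n : ℕ∞ | ∃ rs : List R, (rs.length : ℕ∞) = n ∧
    (∀ r ∈ rs, r ∈ IsLocalRing.maximalIdeal R) ∧ RingTheory.Sequence.IsRegular M rs}

/-!
A finite free resolution of `M` gives `id M ≤ id R`. For the converse, `id R` and `id M` are
detected by the vanishing of `Ext^i(k, -)`, so it suffices that `Ext^i(k, M) = 0` forces
`Ext^i(k, R) = 0`. Write `M = (R × Rˢ) / K` where the first coordinates of the elements of `K` lie
in the maximal ideal. If `Ext^i(k, M) = 0`, every class in `Ext^i(k, R)`, pushed into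
`Ext^i(k, R × Rˢ)` by the first inclusion, comes from `Ext^i(k, K)`, and it is recovered by applying
the first coordinate. So it is enough that the linear form `K → R` given by the first coordinate
induces zero on `Ext^i(k, -)`.

Since `K` has a finite free resolution, replacing `R` by an injective resolution `J` in it and
taking iterated cones yields a K-injective model `E` of `K` whose terms are sums of terms of `J`.
Every linear form on `K` becomes a chain map `E ⟶ J` which is a combination of projections with
coefficients among its values, so a form with values in the maximal ideal kills `k` degreewise.
-/

universe u w

section FiniteFreeResolution

/-- `HasFiniteFreeResolution R M`: the module `M` admits a resolution of finite length by finite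
free modules, built from the zero module by repeatedly choosing a finite free cover. -/
inductive HasFiniteFreeResolution (R : Type u) [CommRing R] :
    (M : Type u) → [AddCommGroup M] → [Module R M] → Prop
  | subsingleton (M : Type u) [AddCommGroup M] [Module R M] [Subsingleton M] :
      HasFiniteFreeResolution R M
  | cover {M : Type u} [AddCommGroup M] [Module R M] {g : ℕ} (π : (Fin g → R) →ₗ[R] M)
      (surjective : Function.Surjective π)
      (ker : HasFiniteFreeResolution R (LinearMap.ker π)) :
      HasFiniteFreeResolution R M

variable {R : Type u} [CommRing R]

theorem hasFiniteFreeResolution_of_hasProjectiveDimensionLT [IsNoetherianRing R] [IsLocalRing R]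
    (p : ℕ) (M : Type u) [AddCommGroup M] [Module R M] [Module.Finite R M]
    [hM : HasProjectiveDimensionLT (ModuleCat.of R M) p] : HasFiniteFreeResolution R M := by
  induction p generalizing M with
  | zero =>
    have := ModuleCat.subsingleton_of_isZero
      (isZero_of_hasProjectiveDimensionLT_zero (ModuleCat.of R M))
    exact .subsingleton M
  | succ p ih =>
    cases p with
    | zero =>
      rw [← projective_iff_hasProjectiveDimensionLT_one, ← IsProjective.iff_projective] at hM
      have : Module.Free R M := Module.free_of_flat_of_isLocalRing
      let e := (Module.finBasis R M).equivFun.symm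
      have : Subsingleton (LinearMap.ker e.toLinearMap) := by
        rw [LinearEquiv.ker]
        infer_instance
      exact .cover e.toLinearMap e.surjective (.subsingleton _)
    | succ p =>
      obtain ⟨g, π, hπ⟩ := Module.Finite.exists_fin' R M
      have := ((LinearMap.shortExact_shortComplexKer hπ).hasProjectiveDimensionLT_X₃_iff p
        ((IsProjective.iff_projective (Fin g → R)).mp inferInstance)).mp hM
      exact .cover π hπ (ih (LinearMap.ker π))

theorem hasInjectiveDimensionLT_fin_fun (n : ℕ) [HasInjectiveDimensionLT (ModuleCat.of R R) n]
    (g : ℕ) : HasInjectiveDimensionLT (ModuleCat.of R (Fin g → R)) n := by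
  induction g with
  | zero =>
    have := (ModuleCat.isZero_of_subsingleton
      (ModuleCat.of R (Fin 0 → R))).hasInjectiveDimensionLT_zero
    exact hasInjectiveDimensionLT_of_ge _ 0 n n.zero_le
  | succ g ih =>
    exact hasInjectiveDimensionLT_of_iso
      ((ModuleCat.biprodIsoProd (ModuleCat.of R R) (ModuleCat.of R (Fin g → R))) ≪≫
        (Fin.consLinearEquiv R (fun _ ↦ R)).toModuleIso) n

theorem HasFiniteFreeResolution.hasInjectiveDimensionLT {M : Type u} [AddCommGroup M] [Module R M]
    (hM : HasFiniteFreeResolution R M) (n : ℕ) [HasInjectiveDimensionLT (ModuleCat.of R R) n] :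
    HasInjectiveDimensionLT (ModuleCat.of R M) n := by
  induction hM with
  | subsingleton M =>
    have := (ModuleCat.isZero_of_subsingleton (ModuleCat.of R M)).hasInjectiveDimensionLT_zero
    exact hasInjectiveDimensionLT_of_ge _ 0 n n.zero_le
  | @cover M _ _ g π hπ _ ih =>
    exact (LinearMap.shortExact_shortComplexKer hπ).hasInjectiveDimensionLT_X₃ n
      (hasInjectiveDimensionLT_fin_fun n g) (hasInjectiveDimensionLT_of_ge _ n (n + 1) n.le_succ)

end FiniteFreeResolution

section Ext

open Abelian

variable {C : Type*} [Category* C] [Abelian C] [HasExt.{w} C]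

theorem subsingleton_ext_of_iso {X Y : C} (e : X ≅ Y) (N : C) (i : ℕ)
    [Subsingleton (Ext Y N i)] : Subsingleton (Ext X N i) := by
  refine subsingleton_of_forall_eq 0 fun x ↦ ?_
  rw [← Ext.mk₀_id_comp x, ← e.hom_inv_id, ← Ext.mk₀_comp_mk₀_assoc,
    Subsingleton.elim ((Ext.mk₀ e.inv).comp x (zero_add i)) 0, Ext.comp_zero]

theorem subsingleton_ext_of_shortExact {S : ShortComplex C} (hS : S.ShortExact) (N : C) (i : ℕ)
    [Subsingleton (Ext S.X₁ N i)] [Subsingleton (Ext S.X₃ N i)] :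
    Subsingleton (Ext S.X₂ N i) := by
  refine subsingleton_of_forall_eq 0 fun x ↦ ?_
  obtain ⟨y, rfl⟩ := Ext.contravariant_sequence_exact₂ hS N x (Subsingleton.elim _ _)
  simp [Subsingleton.elim y 0]

end Ext

section ResidueField

open Abelian IsLocalRing

variable {R : Type u} [CommRing R]

theorem hasInjectiveDimensionLE_of_subsingleton_ext_quotient (N : ModuleCat.{u} R) (n : ℕ)
    (h : ∀ I : Ideal R, Subsingleton (Ext (ModuleCat.of R (R ⧸ I)) N (n + 1))) :
    HasInjectiveDimensionLE N n := by
  induction n generalizing N with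
  | zero =>
    change HasInjectiveDimensionLT N 1
    rw [← injective_iff_hasInjectiveDimensionLT_one, ← Module.injective_iff_injective_object,
      ← Module.Baer.iff_injective]
    intro I g
    let S : ShortComplex (ModuleCat.{u} R) := ModuleCat.shortComplexOfCompEqZero I.subtype
      (Submodule.mkQ I) (LinearMap.exact_subtype_mkQ I).linearMap_comp_eq_zero
    have hS : S.ShortExact := ModuleCat.shortComplex_shortExact S
      (LinearMap.exact_subtype_mkQ I) (Submodule.subtype_injective I) (Submodule.mkQ_surjective _)
    obtain ⟨x, hx⟩ := Ext.contravariant_sequence_exact₁ hS N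
      (Ext.mk₀ (ModuleCat.ofHom g : S.X₁ ⟶ N)) (add_zero 1) ((h I).elim _ _)
    obtain ⟨f, rfl⟩ := (Ext.mk₀_bijective _ _).2 x
    rw [Ext.mk₀_comp_mk₀, (Ext.mk₀_bijective _ _).1.eq_iff] at hx
    exact ⟨f.hom, fun x hxI ↦ LinearMap.congr_fun (congrArg ModuleCat.Hom.hom hx) ⟨x, hxI⟩⟩
  | succ n ih =>
    obtain ⟨⟨J, hJ, f, hf⟩⟩ := EnoughInjectives.presentation N
    have hS : (ShortComplex.mk f (Limits.cokernel.π f) (Limits.cokernel.condition f)).ShortExact :=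
      { exact := ShortComplex.exact_cokernel f }
    refine (hS.hasInjectiveDimensionLT_X₃_iff n hJ).mp (ih _ fun I ↦ ?_)
    refine subsingleton_of_forall_eq 0 fun x ↦ ?_
    obtain ⟨y, rfl⟩ := Ext.covariant_sequence_exact₃ _ hS x rfl ((h I).elim _ _)
    rw [Ext.eq_zero_of_injective y, Ext.zero_comp]

variable [IsNoetherianRing R] [IsLocalRing R]

theorem subsingleton_ext_of_quotSMulTop (Y N : ModuleCat.{u} R) [Module.Finite R Y]
    [Module.Finite R N] {x : R} (hx : x ∈ maximalIdeal R) (reg : IsSMulRegular Y x) (i : ℕ)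
    [h : Subsingleton (Ext (ModuleCat.of R (QuotSMulTop x Y)) N (i + 1))] :
    Subsingleton (Ext Y N i) := by
  have hS := reg.smulShortComplex_shortExact
  have smul_id_comp (z : Ext Y N i) : (Ext.mk₀ (x • 𝟙 Y)).comp z (zero_add i) = x • z := by
    rw [Ext.mk₀_smul, Ext.smul_comp, Ext.mk₀_id_comp]
  have surjective_smul (y : Ext Y N i) : ∃ z : Ext Y N i, x • z = y := by
    obtain ⟨z, hz⟩ := Ext.contravariant_sequence_exact₁ hS N y (add_comm 1 i) (h.elim _ _)
    exact ⟨z, (smul_id_comp z).symm.trans hz⟩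
  -- Nakayama: `Ext Y N i` is finite and equal to its multiple by `x`.
  rw [← not_nontrivial_iff_subsingleton]
  intro _
  refine Submodule.top_ne_pointwise_smul_of_mem_jacobson_annihilator
    (maximalIdeal_le_jacobson (Module.annihilator R (Ext Y N i)) hx) (top_unique fun y _ ↦ ?_).symm
  obtain ⟨z, rfl⟩ := surjective_smul y
  exact Submodule.smul_mem_pointwise_smul _ _ ⊤ trivial

theorem subsingleton_ext_quotient_prime (p : Ideal R) [p.IsPrime] (N : ModuleCat.{u} R)
    [Module.Finite R N] (i : ℕ) [Subsingleton (Ext (ModuleCat.of R (ResidueField R)) N i)]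
    (h : ∀ x ∉ p, Subsingleton (Ext (ModuleCat.of R (QuotSMulTop x (R ⧸ p))) N (i + 1))) :
    Subsingleton (Ext (ModuleCat.of R (R ⧸ p)) N i) := by
  by_cases hp : p = maximalIdeal R
  · subst hp
    assumption
  · obtain ⟨x, hxm, hxp⟩ := SetLike.exists_of_lt
      (lt_of_le_of_ne (le_maximalIdeal ‹p.IsPrime›.ne_top) hp)
    have := h x hxp
    exact subsingleton_ext_of_quotSMulTop (ModuleCat.of R (R ⧸ p)) N hxm
      ((isSMulRegular_quotient_iff_mem_of_smul_mem p x).mpr fun _ hy ↦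
        (‹p.IsPrime›.mem_or_mem hy).resolve_left hxp) i

theorem subsingleton_ext_of_residueField (N : ModuleCat.{u} R) [Module.Finite R N] (n : ℕ)
    (h : ∀ i, n < i → Subsingleton (Ext (ModuleCat.of R (ResidueField R)) N i))
    (X : Type u) [AddCommGroup X] [Module R X] [Module.Finite R X] (i : ℕ) (hi : n < i) :
    Subsingleton (Ext (ModuleCat.of R X) N i) := by
  suffices H : ∀ (J : Ideal R) (Y : Type u) [AddCommGroup Y] [Module R Y] [Module.Finite R Y],
      J ≤ Module.annihilator R Y → ∀ i, n < i → Subsingleton (Ext (ModuleCat.of R Y) N i) from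
    H ⊥ X bot_le i hi
  intro J
  induction J using IsNoetherian.induction with
  | hgt J ih =>
  intro Y _ _ hY
  induction hY using IsNoetherianRing.induction_on_isQuotientEquivQuotientPrime R with
  | subsingleton Y =>
    intro _ i _
    have := (ModuleCat.isZero_of_subsingleton (ModuleCat.of R Y)).hasProjectiveDimensionLT_zero
    exact HasProjectiveDimensionLT.subsingleton _ 0 i i.zero_le N
  | exact Y₁ Y₂ Y₃ f g hf hg hfg h₁ h₃ =>
    intro hJ i hi
    have := h₁ (hJ.trans (f.annihilator_le_of_injective hf)) i hi
    have := h₃ (hJ.trans (g.annihilator_le_of_surjective hg)) i hi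
    exact subsingleton_ext_of_shortExact (S := ModuleCat.shortComplexOfCompEqZero f g
      hfg.linearMap_comp_eq_zero) (ModuleCat.shortComplex_shortExact _ hfg hf hg) N i
  | quotient Y p e =>
    intro hJ i hi
    have := h i hi
    have := subsingleton_ext_quotient_prime p.1 N i fun x hx ↦ ?_
    · exact subsingleton_ext_of_iso e.toModuleIso N i
    rw [e.annihilator_eq, Ideal.annihilator_quotient] at hJ
    have hlt : J < J ⊔ Ideal.span {x} :=
      left_lt_sup.mpr fun hle ↦ hx (hJ (hle (Ideal.mem_span_singleton_self x)))
    refine ih _ hlt _ (sup_le ?_ ?_) (i + 1) (hi.trans i.lt_succ_self)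
    · refine le_trans ?_ ((Submodule.mkQ _).annihilator_le_of_surjective
        (Submodule.mkQ_surjective _))
      rwa [Ideal.annihilator_quotient]
    · exact (Ideal.span_singleton_le_iff_mem _).mpr (QuotSMulTop.mem_annihilator _ x)

theorem hasInjectiveDimensionLE_of_subsingleton_ext_residueField (N : ModuleCat.{u} R)
    [Module.Finite R N] (n : ℕ)
    (h : ∀ i, n < i → Subsingleton (Ext (ModuleCat.of R (ResidueField R)) N i)) :
    HasInjectiveDimensionLE N n :=
  hasInjectiveDimensionLE_of_subsingleton_ext_quotient N n fun I ↦
    subsingleton_ext_of_residueField N n h (R ⧸ I) (n + 1) n.lt_succ_self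

end ResidueField

section KInjective

open Limits DerivedCategory

variable {C : Type*} [Category* C] [Abelian C]

instance hasFiniteBiproducts_cochainComplex : HasFiniteBiproducts (CochainComplex C ℤ) :=
  HasFiniteBiproducts.of_hasFiniteProducts

theorem isKInjective_biproduct {g : ℕ} (J : Fin g → CochainComplex C ℤ)
    [hJ : ∀ j, (J j).IsKInjective] : (⨁ J).IsKInjective where
  nonempty_homotopy_zero {K} f hK := by
    refine ⟨HomotopyCategory.homotopyOfEq _ _ ?_⟩
    have quotient_map_comp_π (j : Fin g) :
        (HomotopyCategory.quotient C (.up ℤ)).map (f ≫ biproduct.π J j) = 0 := by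
      obtain ⟨h⟩ := (hJ j).nonempty_homotopy_zero (f ≫ biproduct.π J j) hK
      rw [HomotopyCategory.eq_of_homotopy _ _ h, Functor.map_zero]
    rw [← Category.comp_id f, ← biproduct.total, Preadditive.comp_sum, Functor.map_sum,
      Functor.map_zero]
    refine Finset.sum_eq_zero fun j _ ↦ ?_
    rw [← Category.assoc, Functor.map_comp, quotient_map_comp_π, zero_comp]

theorem isKInjective_mappingCone {E F : CochainComplex C ℤ} (ψ : E ⟶ F)
    [hE : E.IsKInjective] [hF : F.IsKInjective] :
    (CochainComplex.mappingCone ψ).IsKInjective := by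
  rw [CochainComplex.isKInjective_iff_rightOrthogonal] at hE hF ⊢
  exact ObjectProperty.ext_of_isTriangulatedClosed₃ _ (CochainComplex.mappingCone.triangleh ψ)
    (HomotopyCategory.mappingCone_triangleh_distinguished ψ) hE hF

theorem single_comp_shift_map_eq_zero {X : C} {E J : CochainComplex C ℤ} (φ : E ⟶ J)
    (hφ : ∀ (n : ℤ) (x : X ⟶ E.X n), x ≫ φ.f n = 0) (i : ℤ)
    (v : (HomologicalComplex.single C (.up ℤ) 0).obj X ⟶ E⟦i⟧) : v ≫ φ⟦i⟧' = 0 := by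
  refine HomologicalComplex.from_single_hom_ext ?_
  rw [← cancel_epi (HomologicalComplex.singleObjXSelf (ComplexShape.up ℤ) 0 X).inv,
    HomologicalComplex.comp_f, HomologicalComplex.zero_f, comp_zero, ← Category.assoc]
  exact hφ (0 + i) _

variable [HasDerivedCategory.{w} C]

theorem exists_Q_map_eq_of_isKInjective {F E : CochainComplex C ℤ} [E.IsKInjective]
    (u : Q.obj F ⟶ Q.obj E) : ∃ v : F ⟶ E, Q.map v = u := by
  obtain ⟨v, hv⟩ := (CochainComplex.IsKInjective.Qh_map_bijective
    ((HomotopyCategory.quotient _ _).obj F) E).2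
    ((quotientCompQhIso C).hom.app F ≫ u ≫ (quotientCompQhIso C).inv.app E)
  obtain ⟨v, rfl⟩ := (HomotopyCategory.quotient _ _).map_surjective v
  refine ⟨v, (cancel_epi ((quotientCompQhIso C).hom.app F)).mp ?_⟩
  rw [← (quotientCompQhIso C).hom.naturality v, Functor.comp_map, hv, Category.assoc,
    Category.assoc, Iso.inv_hom_id_app, Category.comp_id]

theorem singleFunctor_map_comp_injective {X Y Z : C} (p : X ⟶ Y) [Epi p] :
    Function.Injective fun u : (singleFunctor C 0).obj Y ⟶ (singleFunctor C 0).obj Z ↦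
      (singleFunctor C 0).map p ≫ u := by
  intro u v h
  obtain ⟨u, rfl⟩ := (singleFunctor C 0).map_surjective u
  obtain ⟨v, rfl⟩ := (singleFunctor C 0).map_surjective v
  dsimp only at h
  rw [← Functor.map_comp, ← Functor.map_comp] at h
  rw [(cancel_epi p).mp ((singleFunctor C 0).map_injective h)]

theorem comp_shift_Q_map_eq_zero {F E J : CochainComplex C ℤ} [E.IsKInjective] (φ : E ⟶ J)
    (i : ℤ) (hφ : ∀ v : F ⟶ E⟦i⟧, v ≫ φ⟦i⟧' = 0) (u : Q.obj F ⟶ (Q.obj E)⟦i⟧) :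
    u ≫ (Q.map φ)⟦i⟧' = 0 := by
  obtain ⟨v, hv⟩ := exists_Q_map_eq_of_isKInjective (u ≫ (Q.commShiftIso i).inv.app E)
  refine (Preadditive.IsIso.comp_right_eq_zero _ ((Q.commShiftIso i).inv.app J)).mp ?_
  calc (u ≫ (Q.map φ)⟦i⟧') ≫ (Q.commShiftIso i).inv.app J
      = u ≫ (Q.commShiftIso i).inv.app E ≫ Q.map (φ⟦i⟧') := by
        rw [Category.assoc]
        exact congrArg (u ≫ ·) ((Q.commShiftIso i).inv.naturality φ)
    _ = Q.map (v ≫ φ⟦i⟧') := by rw [Functor.map_comp, hv, Category.assoc]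
    _ = 0 := by rw [hφ, Functor.map_zero]

theorem singleFunctor_comp_shift_Q_map_eq_zero {X : C} {E J : CochainComplex C ℤ} [E.IsKInjective]
    (φ : E ⟶ J) (hφ : ∀ (n : ℤ) (x : X ⟶ E.X n), x ≫ φ.f n = 0) (i : ℤ)
    (u : (singleFunctor C 0).obj X ⟶ (Q.obj E)⟦i⟧) : u ≫ (Q.map φ)⟦i⟧' = 0 :=
  comp_shift_Q_map_eq_zero (F := (CochainComplex.singleFunctor C 0).obj X) φ i
    (single_comp_shift_map_eq_zero φ hφ i) u

end KInjective

section LinearFormModel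

open Abelian Limits DerivedCategory

variable {R : Type u} [CommRing R]

theorem hom_eq_sum_smul_proj {g : ℕ} (f : ModuleCat.of R (Fin g → R) ⟶ ModuleCat.of R R) :
    f = ∑ j, f (Pi.single j 1) • ModuleCat.ofHom (LinearMap.proj j) := by
  ext j
  simp [Pi.single_apply]

/-- The chain map from a finite power of `J` to `J` with the same matrix as a linear form on the
finite free module of that rank. -/
noncomputable def powerForm (J : CochainComplex (ModuleCat.{u} R) ℤ) (g : ℕ) :
    (ModuleCat.of R (Fin g → R) ⟶ ModuleCat.of R R) →ₗ[R] ((⨁ fun _ : Fin g ↦ J) ⟶ J) where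
  toFun f := biproduct.desc fun j ↦ f (Pi.single j 1) • 𝟙 J
  map_add' f f' := by
    refine biproduct.hom_ext' _ _ fun j ↦ ?_
    simp [add_smul]
  map_smul' a f := by
    refine biproduct.hom_ext' _ _ fun j ↦ ?_
    simp [mul_smul]

variable {J : CochainComplex (ModuleCat.{u} R) ℤ}

theorem ι_comp_powerForm {g : ℕ} (f : ModuleCat.of R (Fin g → R) ⟶ ModuleCat.of R R)
    (j : Fin g) :
    biproduct.ι (fun _ : Fin g ↦ J) j ≫ powerForm J g f = f (Pi.single j 1) • 𝟙 J :=
  biproduct.ι_desc _ _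

theorem lift_comp_powerForm {g : ℕ} {E : CochainComplex (ModuleCat.{u} R) ℤ}
    (φ : Fin g → (E ⟶ J)) (f : ModuleCat.of R (Fin g → R) ⟶ ModuleCat.of R R) :
    biproduct.lift φ ≫ powerForm J g f = ∑ j, f (Pi.single j 1) • φ j := by
  refine biproduct.lift_desc.trans (Finset.sum_congr rfl fun j _ ↦ ?_)
  rw [Linear.comp_smul, Category.comp_id]

theorem comp_powerForm_f_eq_zero {g : ℕ} (f : ModuleCat.of R (Fin g → R) ⟶ ModuleCat.of R R)
    {X : ModuleCat.{u} R} (hf : LinearMap.range f.hom ≤ Module.annihilator R X) (n : ℤ)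
    (x : X ⟶ (⨁ fun _ : Fin g ↦ J).X n) : x ≫ (powerForm J g f).f n = 0 := by
  have smul_eq_zero (j : Fin g) : f (Pi.single j 1) • x = 0 := by
    ext y
    have := Module.mem_annihilator.mp (hf ⟨Pi.single j 1, rfl⟩) y
    simp [← map_smul, this]
  have powerForm_eq : powerForm J g f =
      ∑ j, f (Pi.single j 1) • biproduct.π (fun _ : Fin g ↦ J) j := by
    refine biproduct.desc_eq.trans (Finset.sum_congr rfl fun j _ ↦ ?_)
    rw [Linear.comp_smul, Category.comp_id]
  have powerForm_f : (powerForm J g f).f n =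
      ∑ j, f (Pi.single j 1) • (biproduct.π (fun _ : Fin g ↦ J) j).f n := by
    rw [powerForm_eq]
    exact map_sum (HomologicalComplex.eval (ModuleCat.{u} R) (.up ℤ) n).mapAddHom _ _
  rw [powerForm_f, Preadditive.comp_sum]
  exact Finset.sum_eq_zero fun j _ ↦ by
    rw [Linear.comp_smul, ← Linear.smul_comp, smul_eq_zero, zero_comp]

variable [HasDerivedCategory.{w} (ModuleCat.{u} R)]
  (ε : (singleFunctor (ModuleCat.{u} R) 0).obj (ModuleCat.of R R) ⟶ Q.obj J) (g : ℕ)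

/-- The map from a finite free module to a finite power of `J` which is `ε` on each coordinate. -/
noncomputable def powerUnit : (singleFunctor (ModuleCat.{u} R) 0).obj (ModuleCat.of R (Fin g → R)) ⟶
    Q.obj (⨁ fun _ : Fin g ↦ J) :=
  ∑ j, (singleFunctor (ModuleCat.{u} R) 0).map (ModuleCat.ofHom (LinearMap.proj j)) ≫ ε ≫
    Q.map (biproduct.ι (fun _ : Fin g ↦ J) j)

theorem powerUnit_comp_powerForm (f : ModuleCat.of R (Fin g → R) ⟶ ModuleCat.of R R) :
    powerUnit ε g ≫ Q.map (powerForm J g f) = (singleFunctor (ModuleCat.{u} R) 0).map f ≫ ε := by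
  conv_rhs => rw [hom_eq_sum_smul_proj f]
  simp [powerUnit, Preadditive.sum_comp, ← Functor.map_comp, ι_comp_powerForm]

/-- A K-injective model of the linear forms on the module `K`, relative to a complex `J` with a
map `ε : R ⟶ J` in the derived category: a K-injective complex `E` with a map `ι : K ⟶ E` in the
derived category, together with a linear choice of chain maps `E ⟶ J` representing the linear
forms on `K`, such that the map chosen for `f` kills in each degree every module killed by the
values of `f`. It is not required that `ι` be an isomorphism. -/
structure LinearFormModel (K : ModuleCat.{u} R) where
  E : CochainComplex (ModuleCat.{u} R) ℤ
  isKInjective : E.IsKInjective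
  ι : (singleFunctor (ModuleCat.{u} R) 0).obj K ⟶ Q.obj E
  φ : (K ⟶ ModuleCat.of R R) →ₗ[R] (E ⟶ J)
  ι_comp_φ (f : K ⟶ ModuleCat.of R R) :
    ι ≫ Q.map (φ f) = (singleFunctor (ModuleCat.{u} R) 0).map f ≫ ε
  comp_φ_f (f : K ⟶ ModuleCat.of R R) {X : ModuleCat.{u} R}
    (hf : LinearMap.range f.hom ≤ Module.annihilator R X) (n : ℤ) (x : X ⟶ E.X n) :
    x ≫ (φ f).f n = 0

namespace LinearFormModel

variable {ε g}

theorem nonempty_of_subsingleton (K : ModuleCat.{u} R) [Subsingleton K] :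
    Nonempty (LinearFormModel ε K) := by
  obtain ⟨Z, hZ⟩ := HasZeroObject.zero (C := CochainComplex (ModuleCat.{u} R) ℤ)
  exact ⟨{
    E := Z
    isKInjective := ⟨fun f _ ↦ ⟨Homotopy.ofEq (hZ.eq_of_tgt _ _)⟩⟩
    ι := 0
    φ := 0
    ι_comp_φ f := ((singleFunctor _ 0).map_isZero
      (ModuleCat.isZero_of_subsingleton K)).eq_of_src _ _
    comp_φ_f f _ _ n x := comp_zero }⟩

variable (ε g) in
/-- The `LinearFormModel` of a finite free module given by the finite power of `J`. -/
noncomputable def pi [J.IsKInjective] : LinearFormModel ε (ModuleCat.of R (Fin g → R)) where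
  E := ⨁ fun _ : Fin g ↦ J
  isKInjective := isKInjective_biproduct _
  ι := powerUnit ε g
  φ := powerForm J g
  ι_comp_φ := powerUnit_comp_powerForm ε g
  comp_φ_f := comp_powerForm_f_eq_zero

theorem exists_hom_pi {K : ModuleCat.{u} R} (A : LinearFormModel ε K) [J.IsKInjective]
    (i : K ⟶ ModuleCat.of R (Fin g → R)) :
    ∃ ψ : A.E ⟶ (pi ε g).E,
      A.ι ≫ Q.map ψ = (singleFunctor (ModuleCat.{u} R) 0).map i ≫ (pi ε g).ι ∧
      ∀ f, ψ ≫ (pi ε g).φ f = A.φ (i ≫ f) := by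
  let coord (j : Fin g) : K ⟶ ModuleCat.of R R := i ≫ ModuleCat.ofHom (LinearMap.proj j)
  let ψ : A.E ⟶ ⨁ fun _ : Fin g ↦ J := biproduct.lift fun j ↦ A.φ (coord j)
  have ι_comp_ψ : A.ι ≫ Q.map ψ = (singleFunctor (ModuleCat.{u} R) 0).map i ≫ powerUnit ε g := by
    simp [ψ, biproduct.lift_eq, powerUnit, Preadditive.comp_sum, reassoc_of% A.ι_comp_φ, coord]
  have ψ_comp_powerForm (f : ModuleCat.of R (Fin g → R) ⟶ ModuleCat.of R R) :
      ψ ≫ powerForm J g f = A.φ (i ≫ f) := by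
    conv_rhs => rw [hom_eq_sum_smul_proj f]
    simp [ψ, lift_comp_powerForm, coord, Preadditive.comp_sum]
  exact ⟨ψ, ι_comp_ψ, ψ_comp_powerForm⟩

variable [IsIso ε]

theorem nonempty_of_shortExact {S : ShortComplex (ModuleCat.{u} R)} (hS : S.ShortExact)
    (A : LinearFormModel ε S.X₁) (B : LinearFormModel ε S.X₂) (ψ : A.E ⟶ B.E)
    (hι : A.ι ≫ Q.map ψ = (singleFunctor (ModuleCat.{u} R) 0).map S.f ≫ B.ι)
    (hφ : ∀ f, ψ ≫ B.φ f = A.φ (S.f ≫ f)) :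
    Nonempty (LinearFormModel ε S.X₃) := by
  have := A.isKInjective
  have := B.isKInjective
  have := hS.epi_g
  obtain ⟨ι, comm, -⟩ : ∃ ι : (singleFunctor (ModuleCat.{u} R) 0).obj S.X₃ ⟶
      Q.obj (CochainComplex.mappingCone ψ), (singleFunctor (ModuleCat.{u} R) 0).map S.g ≫ ι =
        B.ι ≫ Q.map (CochainComplex.mappingCone.inr ψ) ∧ _ :=
    Pretriangulated.complete_distinguished_triangle_morphism _ _
      hS.singleTriangle_distinguished (mappingCone_triangle_distinguished ψ) A.ι B.ι hι.symm
  have comp_φ_comp (f : S.X₃ ⟶ ModuleCat.of R R) : ψ ≫ B.φ (S.g ≫ f) = 0 := by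
    rw [hφ, S.zero_assoc, zero_comp, map_zero]
  let φ : (S.X₃ ⟶ ModuleCat.of R R) →ₗ[R] (CochainComplex.mappingCone ψ ⟶ J) :=
    { toFun f := CochainComplex.mappingCone.desc ψ 0 (B.φ (S.g ≫ f)) (by simp [comp_φ_comp])
      map_add' f f' := by
        ext n : 1
        simp [CochainComplex.mappingCone.desc_f _ _ _ _ n (n + 1) rfl]
      map_smul' a f := by
        ext n : 1
        simp [CochainComplex.mappingCone.desc_f _ _ _ _ n (n + 1) rfl] }
  refine ⟨⟨_, isKInjective_mappingCone ψ, ι, φ, fun f ↦ ?_, fun f X hf n x ↦ ?_⟩⟩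
  · suffices ι ≫ Q.map (φ f) ≫ inv ε = (singleFunctor (ModuleCat.{u} R) 0).map f by
      rw [← this, Category.assoc, Category.assoc, IsIso.inv_hom_id, Category.comp_id]
    apply singleFunctor_map_comp_injective S.g
    dsimp only
    have inr_comp_φ : CochainComplex.mappingCone.inr ψ ≫ φ f = B.φ (S.g ≫ f) := by simp [φ]
    rw [reassoc_of% comm, ← Functor.map_comp_assoc, inr_comp_φ, reassoc_of% B.ι_comp_φ,
      IsIso.hom_inv_id, Category.comp_id, Functor.map_comp]
  · have φ_f : (φ f).f n = (CochainComplex.mappingCone.snd ψ).v n n (add_zero n) ≫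
        (B.φ (S.g ≫ f)).f n := by
      simp [φ, CochainComplex.mappingCone.desc_f _ _ _ _ n (n + 1) rfl]
    rw [φ_f, ← Category.assoc]
    exact B.comp_φ_f _ ((LinearMap.range_comp_le_range _ _).trans hf) n _

end LinearFormModel

end LinearFormModel

section LinearFormExt

open Abelian Limits DerivedCategory

variable {R : Type u} [CommRing R]

theorem HasFiniteFreeResolution.nonempty_linearFormModel [HasDerivedCategory.{w} (ModuleCat.{u} R)]
    {J : CochainComplex (ModuleCat.{u} R) ℤ} [J.IsKInjective]
    (ε : (singleFunctor (ModuleCat.{u} R) 0).obj (ModuleCat.of R R) ⟶ Q.obj J) [IsIso ε]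
    {K : Type u} [AddCommGroup K] [Module R K] (hK : HasFiniteFreeResolution R K) :
    Nonempty (LinearFormModel ε (ModuleCat.of R K)) := by
  induction hK with
  | subsingleton K => exact LinearFormModel.nonempty_of_subsingleton (ModuleCat.of R K)
  | @cover K _ _ g π hπ _ ih =>
    obtain ⟨A⟩ := ih
    obtain ⟨ψ, hι, hφ⟩ := A.exists_hom_pi (ModuleCat.ofHom (LinearMap.ker π).subtype)
    exact LinearFormModel.nonempty_of_shortExact (LinearMap.shortExact_shortComplexKer hπ)
      A (LinearFormModel.pi ε g) ψ hι hφ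

theorem HasFiniteFreeResolution.ext_comp_mk₀_eq_zero {K : Type u} [AddCommGroup K] [Module R K]
    (hK : HasFiniteFreeResolution R K) (f : K →ₗ[R] R) {X : ModuleCat.{u} R}
    (hf : LinearMap.range f ≤ Module.annihilator R X) {i : ℕ} (x : Ext X (ModuleCat.of R K) i) :
    x.comp (Ext.mk₀ (ModuleCat.ofHom f)) (add_zero i) = 0 := by
  let := HasDerivedCategory.standard (ModuleCat.{u} R)
  let I := injectiveResolution (ModuleCat.of R R)
  let ε : (singleFunctor (ModuleCat.{u} R) 0).obj (ModuleCat.of R R) ⟶ Q.obj I.cochainComplex :=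
    Q.map I.ι'
  have : IsIso ε := inferInstanceAs (IsIso (Q.map I.ι'))
  obtain ⟨A⟩ := hK.nonempty_linearFormModel ε
  have := A.isKInjective
  have h := singleFunctor_comp_shift_Q_map_eq_zero _ (A.comp_φ_f (ModuleCat.ofHom f) hf) i
    (x.hom ≫ A.ι⟦(i : ℤ)⟧')
  rw [Category.assoc, ← Functor.map_comp, A.ι_comp_φ, Functor.map_comp, ← Category.assoc,
    Preadditive.IsIso.comp_right_eq_zero] at h
  ext
  rwa [Ext.comp_hom, Ext.mk₀_hom, ShiftedHom.comp_mk₀, Ext.zero_hom]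

theorem subsingleton_ext_ring_of_subsingleton_ext {P M : Type u} [AddCommGroup P] [Module R P]
    [AddCommGroup M] [Module R M] {π : P →ₗ[R] M} (hπ : Function.Surjective π)
    (hK : HasFiniteFreeResolution R (LinearMap.ker π)) {r : P →ₗ[R] R} {a : P} (ha : r a = 1)
    {X : ModuleCat.{u} R} (hX : (LinearMap.ker π).map r ≤ Module.annihilator R X) (i : ℕ)
    [h : Subsingleton (Ext X (ModuleCat.of R M) i)] :
    Subsingleton (Ext X (ModuleCat.of R R) i) := by
  have hS := LinearMap.shortExact_shortComplexKer hπ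
  let s : ModuleCat.of R R ⟶ ModuleCat.of R P := ModuleCat.ofHom (LinearMap.toSpanSingleton R P a)
  have s_comp_r : s ≫ ModuleCat.ofHom r = 𝟙 _ := by
    ext
    simp [s, ha]
  refine subsingleton_of_forall_eq 0 fun z ↦ ?_
  obtain ⟨x, hx⟩ := Ext.covariant_sequence_exact₂ X hS (z.comp (Ext.mk₀ s) (add_zero i))
    (h.elim _ _)
  have hr : LinearMap.range (r ∘ₗ (LinearMap.ker π).subtype) ≤ Module.annihilator R X := by
    rwa [LinearMap.range_comp, Submodule.range_subtype]
  calc z = (z.comp (Ext.mk₀ s) (add_zero i)).comp (Ext.mk₀ (ModuleCat.ofHom r)) (add_zero i) := by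
        simp [s_comp_r]
    _ = (x.comp (Ext.mk₀ π.shortComplexKer.f) (add_zero i)).comp
          (Ext.mk₀ (ModuleCat.ofHom r)) (add_zero i) := by rw [hx]
    _ = x.comp (Ext.mk₀ (ModuleCat.ofHom (r ∘ₗ (LinearMap.ker π).subtype))) (add_zero i) := by
        rw [Ext.comp_assoc_of_third_deg_zero, Ext.mk₀_comp_mk₀]
        rfl
    _ = 0 := hK.ext_comp_mk₀_eq_zero _ hr x

end LinearFormExt

section Local

open IsLocalRing

variable {R : Type u} [CommRing R] [IsLocalRing R]

theorem exists_surjective_map_fst_ker_le_maximalIdeal [IsNoetherianRing R] (M : Type u)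
    [AddCommGroup M] [Module R M] [Module.Finite R M] [Nontrivial M] :
    ∃ (s : ℕ) (π : (R × (Fin s → R)) →ₗ[R] M), Function.Surjective π ∧
      (LinearMap.ker π).map (LinearMap.fst R R (Fin s → R)) ≤ maximalIdeal R := by
  obtain ⟨N, hN⟩ := IsCoatomic.exists_coatom (Submodule R M)
  obtain ⟨m, -, hm⟩ := SetLike.exists_of_lt hN.lt_top
  obtain ⟨s, q, hq⟩ := Module.Finite.exists_fin' R N
  refine ⟨s, (LinearMap.toSpanSingleton R M m).coprod (N.subtype ∘ₗ q), ?_, ?_⟩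
  · rw [← LinearMap.range_eq_top, LinearMap.range_coprod, LinearMap.range_comp,
      LinearMap.range_eq_top.mpr hq, Submodule.map_top, Submodule.range_subtype]
    refine hN.2 _ (right_lt_sup.mpr fun hle ↦ hm (hle ?_))
    exact ⟨1, by simp⟩
  · rintro _ ⟨⟨a, b⟩, hab, rfl⟩
    by_contra ha
    have ha : IsUnit a := by simpa using ha
    have smul_eq : a • m = -(q b : M) := by simpa [add_eq_zero_iff_eq_neg] using hab
    refine hm ((Submodule.smul_mem_iff_of_isUnit N ha).mp ?_)
    rw [smul_eq]
    exact N.neg_mem (q b).2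

variable [IsNoetherianRing R]

theorem hasInjectiveDimensionLE_ring_iff (M : Type u) [AddCommGroup M] [Module R M]
    [Module.Finite R M] [Nontrivial M] (p : ℕ) [HasProjectiveDimensionLE (ModuleCat.of R M) p]
    (n : ℕ) :
    HasInjectiveDimensionLE (ModuleCat.of R R) n ↔
      HasInjectiveDimensionLE (ModuleCat.of R M) n := by
  refine ⟨fun h ↦ (hasFiniteFreeResolution_of_hasProjectiveDimensionLT (p + 1)
    M).hasInjectiveDimensionLT (n + 1), fun h ↦ ?_⟩
  refine hasInjectiveDimensionLE_of_subsingleton_ext_residueField _ n fun i hi ↦ ?_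
  obtain ⟨s, π, hπ, hker⟩ := exists_surjective_map_fst_ker_le_maximalIdeal (R := R) M
  have : HasProjectiveDimensionLT (ModuleCat.of R M) (p + 2) :=
    hasProjectiveDimensionLT_of_ge _ (p + 1) (p + 2) (p + 1).le_succ
  have : HasProjectiveDimensionLT (ModuleCat.of R (LinearMap.ker π)) (p + 1) :=
    ((LinearMap.shortExact_shortComplexKer hπ).hasProjectiveDimensionLT_X₃_iff p
      ((IsProjective.iff_projective (R × (Fin s → R))).mp inferInstance)).mp this
  have := HasInjectiveDimensionLT.subsingleton (ModuleCat.of R M) (n + 1) i hi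
    (ModuleCat.of R (ResidueField R))
  exact subsingleton_ext_ring_of_subsingleton_ext hπ
    (hasFiniteFreeResolution_of_hasProjectiveDimensionLT (p + 1) (LinearMap.ker π))
    (r := LinearMap.fst R R (Fin s → R)) (a := (1, 0)) rfl
    (hker.trans (Ideal.annihilator_quotient (I := maximalIdeal R)).ge) i

end Local

section Dimension

variable {R : Type} [CommRing R]

theorem idLE_iff_hasInjectiveDimensionLE (n : ℕ) (M : Type) [AddCommGroup M] [Module R M] :
    idLE R n M inferInstance inferInstance ↔ HasInjectiveDimensionLE (ModuleCat.of R M) n := by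
  induction n generalizing M with
  | zero =>
    exact (Module.injective_iff_injective_object R M).trans
      injective_iff_hasInjectiveDimensionLT_one
  | succ n ih =>
    have quotient_range_iff (I : Type) [AddCommGroup I] [Module R I] [hI : Module.Injective R I]
        (f : M →ₗ[R] I) (hf : Function.Injective f) :
        HasInjectiveDimensionLE (ModuleCat.of R (I ⧸ LinearMap.range f)) n ↔
          HasInjectiveDimensionLE (ModuleCat.of R M) (n + 1) := by
      let S : ShortComplex (ModuleCat.{0} R) :=
        ModuleCat.shortComplexOfCompEqZero f (LinearMap.range f).mkQ
          f.exact_map_mkQ_range.linearMap_comp_eq_zero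
      have hS : S.ShortExact := ModuleCat.shortComplex_shortExact S
        f.exact_map_mkQ_range hf (Submodule.mkQ_surjective _)
      exact hS.hasInjectiveDimensionLT_X₃_iff n
        ((Module.injective_iff_injective_object R I).mp hI)
    constructor
    · rintro ⟨I, _, _, f, hI, hf, h⟩
      exact (quotient_range_iff I f hf).mp ((ih _).mp h)
    · intro h
      obtain ⟨⟨I, hI, f, hf⟩⟩ := EnoughInjectives.presentation (ModuleCat.of R M)
      have hI : Module.Injective R I := (Module.injective_iff_injective_object R I).mpr hI
      have hf : Function.Injective f.hom := (ModuleCat.mono_iff_injective f).mp hf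
      exact ⟨I, inferInstance, inferInstance, f.hom, hI, hf,
        (ih _).mpr ((quotient_range_iff I f.hom hf).mpr h)⟩

theorem hasProjectiveDimensionLE_of_pdLE (n : ℕ) (M : Type) [AddCommGroup M] [Module R M]
    (h : pdLE R n M inferInstance inferInstance) :
    HasProjectiveDimensionLE (ModuleCat.of R M) n := by
  induction n generalizing M with
  | zero =>
    exact projective_iff_hasProjectiveDimensionLT_one.mp ((IsProjective.iff_projective M).mp h)
  | succ n ih =>
    obtain ⟨P, _, _, f, hP, hf, h⟩ := h
    exact ((LinearMap.shortExact_shortComplexKer hf).hasProjectiveDimensionLT_X₃_iff n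
      ((IsProjective.iff_projective P).mp hP)).mpr (ih _ h)

theorem injDim_ring_eq_injDim_module_general [IsNoetherianRing R] [IsLocalRing R]
    (M : Type) [AddCommGroup M] [Module R M] [Module.Finite R M] [Nontrivial M]
    (hpd : ∃ n : ℕ, pdLE R n M inferInstance inferInstance) : injDim R R = injDim R M := by
  obtain ⟨p, hp⟩ := hpd
  have := hasProjectiveDimensionLE_of_pdLE p M hp
  have idLE_iff (n : ℕ) : idLE R n R inferInstance inferInstance ↔
      idLE R n M inferInstance inferInstance := by
    rw [idLE_iff_hasInjectiveDimensionLE, idLE_iff_hasInjectiveDimensionLE,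
      hasInjectiveDimensionLE_ring_iff M p]
  simp only [injDim, idLE_iff]

end Dimension

/-- If `M` is a nonzero finitely generated module of finite injective and finite projective
dimension over a commutative noetherian local ring `R`, then `id_R R = id_R M`;
in particular `id_R R` is finite. -/
theorem injDim_ring_eq_injDim_module (R : Type) [CommRing R] [IsNoetherianRing R] [IsLocalRing R]
    (M : Type) [AddCommGroup M] [Module R M] [Module.Finite R M] [Nontrivial M]
    (hpd : ∃ n : ℕ, pdLE R n M inferInstance inferInstance)
    (hid : ∃ n : ℕ, idLE R n M inferInstance inferInstance) :
    injDim R R = injDim R M ∧ injDim R R ≠ ⊤ := by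
  have h := injDim_ring_eq_injDim_module_general M hpd
  obtain ⟨n, hn⟩ := hid
  exact ⟨h, h ▸ ne_top_of_le_ne_top (ENat.natCast_ne_top n) (sInf_le ⟨n, rfl, hn⟩)⟩
end

section
/- Let R be a commutative noetherian ring, C a semidualizing R-module, and M a finitely generated R-module with finite C-projective dimension and finite C-injective dimension. Then the localization R_p is a Gorenstein local ring for every prime ideal p in the support of M. -/
open CategoryTheory TensorProduct

/-!
The unit `M → Hom(C, C ⊗ M)` is bijective: for `M = Hom(C, I)` with `I` injective this is
Hom-evaluation, and it passes along a finite resolution of `M` by such modules because `C ⊗ -`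
stays exact there, which is checked on character modules, where `Tor` becomes `Ext`. Finite
`C`-projective dimension provides a surjection `C ⊗ P → M`. At a prime `p` in the support of `M`
it forces some `φ : C → M` to be nonzero in `M ⊗ κ(p)`. The maps `x ↦ c ⊗ φ x` come from `M` by
surjectivity of the unit, so `C ⊗ κ(p)` is spanned by one element. Hence `C_p` is cyclic, and
since it is faithful, it is isomorphic to `R_p`. So `M_p` has finite projective and injective
dimension over `R_p`.

Let `k` be the residue field of the local ring `R_p`, and let `K` be the kernel of a surjection
from a finite free module `F` onto `M_p`. There is a surjective functional `w` on `F` mapping `K`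
into the maximal ideal. As `K` has finite projective dimension, the lift of a functional on `K` to
injective resolutions can be chosen linear in its values, so `w` induces the zero map
`Ext(k, K) → Ext(k, R_p)`. Where `Ext(k, M_p) = 0`, the map `Ext(k, K) → Ext(k, F)` is surjective,
and so is `Ext(k, F) → Ext(k, R_p)` since `w` splits. Thus `Ext(k, R_p)` vanishes in high degrees,
and the Bass criterion shows that `R_p` is Gorenstein.
-/

universe w v u

/-! ### Ext and short exact sequences -/

section ShortExact

open Abelian

variable {A : Type u} [Category.{v} A] [Abelian A] [HasExt.{w} A] {S : ShortComplex A}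
  (hS : S.ShortExact) {X Y : A} {n : ℕ}
include hS

theorem subsingleton_ext_to_X₃ (h₂ : Subsingleton (Ext X S.X₂ n))
    (h₁ : Subsingleton (Ext X S.X₁ (n + 1))) : Subsingleton (Ext X S.X₃ n) := by
  refine subsingleton_of_forall_eq 0 fun e ↦ ?_
  obtain ⟨e', rfl⟩ := Ext.covariant_sequence_exact₃ _ hS e rfl (Subsingleton.elim _ _)
  rw [Subsingleton.elim e' 0, Ext.zero_comp]

theorem subsingleton_ext_from_X₁ (h₂ : Subsingleton (Ext S.X₂ Y n))
    (h₃ : Subsingleton (Ext S.X₃ Y (n + 1))) : Subsingleton (Ext S.X₁ Y n) := by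
  refine subsingleton_of_forall_eq 0 fun e ↦ ?_
  obtain ⟨e', rfl⟩ := Ext.contravariant_sequence_exact₁ hS _ e (Nat.add_comm 1 n)
    (Subsingleton.elim _ _)
  rw [Subsingleton.elim e' 0, Ext.comp_zero]

theorem subsingleton_ext_from_X₂ (h₁ : Subsingleton (Ext S.X₁ Y n))
    (h₃ : Subsingleton (Ext S.X₃ Y n)) : Subsingleton (Ext S.X₂ Y n) := by
  refine subsingleton_of_forall_eq 0 fun e ↦ ?_
  obtain ⟨e', rfl⟩ := Ext.contravariant_sequence_exact₂ hS _ e (Subsingleton.elim _ _)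
  rw [Subsingleton.elim e' 0, Ext.comp_zero]

theorem subsingleton_ext_from_X₃ (h₁ : Subsingleton (Ext S.X₁ Y n))
    (h₂ : Subsingleton (Ext S.X₂ Y (n + 1))) : Subsingleton (Ext S.X₃ Y (n + 1)) := by
  refine subsingleton_of_forall_eq 0 fun e ↦ ?_
  obtain ⟨e', rfl⟩ := Ext.contravariant_sequence_exact₃ hS _ e (Subsingleton.elim _ _)
    (Nat.add_comm 1 n)
  rw [Subsingleton.elim e' 0, Ext.comp_zero]

theorem exists_comp_g_eq_of_subsingleton_ext (h₁ : Subsingleton (Ext X S.X₁ 1)) (h : X ⟶ S.X₃) :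
    ∃ k, k ≫ S.g = h := by
  obtain ⟨e, he⟩ := Ext.covariant_sequence_exact₃ _ hS (Ext.mk₀ h) (zero_add 1)
    (Subsingleton.elim _ _)
  obtain ⟨k, rfl⟩ := (Ext.mk₀_bijective _ _).2 e
  exact ⟨k, (Ext.mk₀_bijective _ _).1 (by rw [← he, Ext.mk₀_comp_mk₀])⟩

theorem exists_f_comp_eq_of_subsingleton_ext (h₃ : Subsingleton (Ext S.X₃ Y 1)) (h : S.X₁ ⟶ Y) :
    ∃ k, S.f ≫ k = h := by
  obtain ⟨e, he⟩ := Ext.contravariant_sequence_exact₁ hS _ (Ext.mk₀ h) (add_zero 1)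
    (Subsingleton.elim _ _)
  obtain ⟨k, rfl⟩ := (Ext.mk₀_bijective _ _).2 e
  exact ⟨k, (Ext.mk₀_bijective _ _).1 (by rw [← he, Ext.mk₀_comp_mk₀])⟩

theorem subsingleton_ext_one_of_forall_exists_f_comp_eq (h₂ : Subsingleton (Ext S.X₂ Y 1))
    (h : ∀ g : S.X₁ ⟶ Y, ∃ k, S.f ≫ k = g) : Subsingleton (Ext S.X₃ Y 1) := by
  refine subsingleton_of_forall_eq 0 fun e ↦ ?_
  obtain ⟨e', rfl⟩ := Ext.contravariant_sequence_exact₃ hS _ e (Subsingleton.elim _ _) (add_zero 1)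
  obtain ⟨g, rfl⟩ := (Ext.mk₀_bijective _ _).2 e'
  obtain ⟨k, rfl⟩ := h g
  rw [← Ext.mk₀_comp_mk₀, hS.extClass_comp_assoc]

end ShortExact

theorem subsingleton_ext_of_subsingleton_extGroup {R X Y : Type} [CommRing R] [AddCommGroup X]
    [Module R X] [AddCommGroup Y] [Module R Y] {n : ℕ}
    (h : Subsingleton (extGroup R X Y (n + 1))) :
    Subsingleton (Abelian.Ext (ModuleCat.of R X) (ModuleCat.of R Y) (n + 1)) := by
  let P := projectiveResolution (ModuleCat.of R X)
  have hexact : (P.complex.linearYonedaObj R (ModuleCat.of R Y)).ExactAt (n + 1) := by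
    rw [HomologicalComplex.exactAt_iff_isZero_homology]
    exact (ModuleCat.isZero_of_subsingleton (extGroup R X Y (n + 1))).of_iso
      (P.isoExt (n + 1) (ModuleCat.of R Y)).symm
  rw [HomologicalComplex.exactAt_iff' _ n (n + 1) (n + 2) (by simp) (by simp),
    ShortComplex.moduleCat_exact_iff] at hexact
  refine subsingleton_of_forall_eq 0 fun e ↦ ?_
  obtain ⟨f, hf, rfl⟩ := P.extMk_surjective e (n + 2) rfl
  obtain ⟨g, hg⟩ := hexact f hf
  exact (P.extMk_eq_zero_iff f (n + 2) rfl hf n rfl).2 ⟨g, hg⟩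

theorem shortExact_mkQ_range {R : Type u} [CommRing R] {M N : Type u} [AddCommGroup M] [Module R M]
    [AddCommGroup N] [Module R N] {f : M →ₗ[R] N} (hf : Function.Injective f) :
    (ModuleCat.shortComplexOfCompEqZero f f.range.mkQ
      f.exact_map_mkQ_range.linearMap_comp_eq_zero).ShortExact :=
  ModuleCat.shortComplex_shortExact _ f.exact_map_mkQ_range hf (Submodule.mkQ_surjective _)

/-! ### The Bass criterion -/

section Bass

open Abelian IsLocalRing

variable {R : Type u} [CommRing R]

/-- For `𝔟 = (𝔞 : x)`, the short complex `R ⧸ 𝔟 → R ⧸ 𝔞 → R ⧸ (𝔞 + (x))` whose first map is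
multiplication by `x`. The colon ideal is given by its membership predicate, so that `𝔟` may be
taken to be `𝔞` itself when `x` is regular on `R ⧸ 𝔞`. -/
noncomputable abbrev colonShortComplex {𝔞 𝔟 : Ideal R} {x : R} (h : ∀ r, r ∈ 𝔟 ↔ r * x ∈ 𝔞) :
    ShortComplex (ModuleCat.{u} R) :=
  ModuleCat.shortComplexOfCompEqZero
    (Submodule.mapQ 𝔟 𝔞 (LinearMap.mulRight R x) fun r hr ↦ (h r).1 hr)
    (Submodule.factor (le_sup_left : 𝔞 ≤ 𝔞 ⊔ Ideal.span {x})) (by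
      ext
      exact (Submodule.Quotient.mk_eq_zero _).2
        (Ideal.mul_mem_left _ _ (Submodule.mem_sup_right (Ideal.mem_span_singleton_self x))))

theorem colonShortComplex_shortExact {𝔞 𝔟 : Ideal R} {x : R} (h : ∀ r, r ∈ 𝔟 ↔ r * x ∈ 𝔞) :
    (colonShortComplex h).ShortExact := by
  refine ModuleCat.shortComplex_shortExact _ (fun y ↦ ⟨fun hy ↦ ?_, ?_⟩) ?_
    (Submodule.factor_surjective le_sup_left)
  · obtain ⟨y, rfl⟩ := Submodule.Quotient.mk_surjective _ y
    have hy' : y ∈ 𝔞 ⊔ Ideal.span {x} := (Submodule.Quotient.mk_eq_zero _).1 hy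
    obtain ⟨a, ha, z, hz, rfl⟩ := Submodule.mem_sup.1 hy'
    obtain ⟨r, rfl⟩ := Ideal.mem_span_singleton'.1 hz
    refine ⟨Submodule.Quotient.mk r, (Submodule.Quotient.eq _).2 ?_⟩
    simpa using ha
  · rintro ⟨r, rfl⟩
    exact congr($((colonShortComplex h).zero) r)
  · refine (injective_iff_map_eq_zero _).2 fun r hr ↦ ?_
    obtain ⟨r, rfl⟩ := Submodule.Quotient.mk_surjective _ r
    rw [Submodule.Quotient.mk_eq_zero, h]
    exact (Submodule.Quotient.mk_eq_zero _).1 hr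

variable [IsLocalRing R] [IsNoetherianRing R] {Y : ModuleCat.{u} R} [Module.Finite R Y]

theorem subsingleton_ext_of_smul_shortExact {A D : ModuleCat.{u} R} [Module.Finite R A]
    {f : A ⟶ A} {g : A ⟶ D} {w : f ≫ g = 0} (hS : (ShortComplex.mk f g w).ShortExact) {x : R}
    (hx : x ∈ maximalIdeal R) (hf : f = x • 𝟙 A) {n : ℕ} (hD : Subsingleton (Ext D Y (n + 1))) :
    Subsingleton (Ext A Y n) := by
  have : Module.Finite R (Ext A Y n) := ModuleCat.finite_ext _ _ _ n
  rw [← Submodule.subsingleton_iff R, ← subsingleton_iff_bot_eq_top, eq_comm]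
  refine Submodule.eq_bot_of_le_smul_of_le_jacobson_bot (maximalIdeal R) _
    Module.Finite.fg_top (fun ξ _ ↦ ?_) (jacobson_eq_maximalIdeal _ bot_ne_top).ge
  obtain ⟨ζ, rfl⟩ := Ext.contravariant_sequence_exact₁ hS _ ξ (Nat.add_comm 1 n)
    (Subsingleton.elim _ _)
  simp only [hf, Ext.mk₀_smul, Ext.smul_comp]
  exact Submodule.smul_mem_smul hx trivial

theorem subsingleton_ext_quotient {m : ℕ}
    (hk : ∀ j, m ≤ j → Subsingleton (Ext (ModuleCat.of R (R ⧸ maximalIdeal R)) Y j))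
    (𝔞 : Ideal R) : ∀ j, m ≤ j → Subsingleton (Ext (ModuleCat.of R (R ⧸ 𝔞)) Y j) := by
  induction 𝔞 using WellFoundedGT.induction with
  | ind 𝔞 ih =>
  intro j hj
  by_cases htop : 𝔞 = ⊤
  · have : Subsingleton (R ⧸ 𝔞) := Submodule.Quotient.subsingleton_iff.2 htop
    have hzero := ModuleCat.isZero_of_subsingleton (ModuleCat.of R (R ⧸ 𝔞))
    have := hzero.hasProjectiveDimensionLT_zero
    exact HasProjectiveDimensionLT.subsingleton _ 0 j (Nat.zero_le j) Y
  by_cases hmax : 𝔞 = maximalIdeal R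
  · exact hmax ▸ hk j hj
  obtain ⟨x, hx, hx𝔞⟩ : ∃ x ∈ maximalIdeal R, x ∉ 𝔞 :=
    SetLike.not_le_iff_exists.1 fun h ↦ hmax (le_antisymm (le_maximalIdeal htop) h)
  have h₃ := ih (𝔞 ⊔ Ideal.span {x}) (by simpa using hx𝔞)
  by_cases hreg : ∀ r, r ∈ 𝔞 ↔ r * x ∈ 𝔞
  · exact subsingleton_ext_of_smul_shortExact (colonShortComplex_shortExact hreg)
      hx (by ext; exact congrArg Submodule.Quotient.mk (mul_comm 1 x)) (h₃ (j + 1) (by lia))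
  · have hcolon (r : R) : r ∈ 𝔞.colon {x} ↔ r * x ∈ 𝔞 := Submodule.mem_colon_singleton
    have hlt : 𝔞 < 𝔞.colon {x} :=
      lt_of_le_of_ne (fun r hr ↦ (hcolon r).2 (𝔞.mul_mem_right x hr)) fun h ↦
        hreg fun r ↦ by rw [← hcolon, ← h]
    exact subsingleton_ext_from_X₂ (colonShortComplex_shortExact hcolon) (ih _ hlt j hj) (h₃ j hj)

end Bass

section InjectiveDimension

open Abelian IsLocalRing

variable {R : Type} [CommRing R]

theorem idLE_of_subsingleton_ext_quotient (n : ℕ) (X : Type) [AddCommGroup X] [Module R X]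
    (h : ∀ 𝔞 : Ideal R, Subsingleton (Ext (ModuleCat.of R (R ⧸ 𝔞)) (ModuleCat.of R X) (n + 1))) :
    idLE R n X inferInstance inferInstance := by
  induction n generalizing X with
  | zero =>
    refine Module.Baer.injective fun 𝔞 φ ↦ ?_
    have hS : (ModuleCat.shortComplexOfCompEqZero 𝔞.subtype 𝔞.mkQ
        (LinearMap.exact_subtype_mkQ 𝔞).linearMap_comp_eq_zero).ShortExact :=
      ModuleCat.shortComplex_shortExact _ (LinearMap.exact_subtype_mkQ 𝔞) 𝔞.injective_subtype
        𝔞.mkQ_surjective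
    obtain ⟨k, hk⟩ := exists_f_comp_eq_of_subsingleton_ext hS (h 𝔞) (ModuleCat.ofHom φ)
    exact ⟨k.hom, fun r hr ↦ congr($hk ⟨r, hr⟩)⟩
  | succ n ih =>
    obtain ⟨⟨I, _, f, _⟩⟩ := EnoughInjectives.presentation (ModuleCat.of R X)
    have hf : Function.Injective f.hom := (ModuleCat.mono_iff_injective f).1 inferInstance
    refine ⟨I, inferInstance, inferInstance, f.hom, Module.injective_module_of_injective_object R I,
      hf, ih _ fun 𝔞 ↦ ?_⟩
    exact subsingleton_ext_to_X₃ (shortExact_mkQ_range hf)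
      (HasInjectiveDimensionLT.subsingleton I 1 (n + 1) (by lia) _) (h 𝔞)

theorem idLE_self_of_subsingleton_ext_residueField [IsLocalRing R] [IsNoetherianRing R] {m : ℕ}
    (hk : ∀ j, m ≤ j →
      Subsingleton (Ext (ModuleCat.of R (R ⧸ maximalIdeal R)) (ModuleCat.of R R) j)) :
    idLE R m R inferInstance inferInstance :=
  idLE_of_subsingleton_ext_quotient m R fun 𝔞 ↦
    subsingleton_ext_quotient hk 𝔞 (m + 1) (Nat.le_succ m)

end InjectiveDimension

/-! ### Linear lifts to injective resolutions -/

section Resolutions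

variable {A : Type u} [Category.{v} A] [Abelian A]

/-- The coaugmentation `Z ⟶ I⁰` of an injective resolution. It is `I.ι.f 0`, whose source in
Mathlib is `((single₀ A).obj Z).X 0`, equal to `Z` only up to unfolding. -/
def coaugmentation {Z : A} (I : InjectiveResolution Z) : Z ⟶ I.cocomplex.X 0 :=
  I.ι.f 0

instance {Z : A} (I : InjectiveResolution Z) : Mono (coaugmentation I) :=
  inferInstanceAs (Mono (I.ι.f 0))

theorem coaugmentation_comp_d {Z : A} (I : InjectiveResolution Z) :
    coaugmentation I ≫ I.cocomplex.d 0 1 = 0 :=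
  I.ι_f_zero_comp_complex_d

theorem coaugmentation_exact {Z : A} (I : InjectiveResolution Z) :
    (ShortComplex.mk _ _ (coaugmentation_comp_d I)).Exact :=
  I.exact₀

theorem coaugmentation_comp_hom {Z Q : A} {I : InjectiveResolution Z} {E : InjectiveResolution Q}
    {f : Z ⟶ Q} (φ : InjectiveResolution.Hom I E f) :
    coaugmentation I ≫ φ.hom.f 0 = f ≫ coaugmentation E := by
  simpa using! φ.ι_f_zero_comp_hom_f_zero

theorem exists_injectiveResolution_hom {Z Q : A} {I : InjectiveResolution Z}
    {E : InjectiveResolution Q} {g : Z ⟶ Q} (f : ∀ i, I.cocomplex.X i ⟶ E.cocomplex.X i)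
    (hf₀ : coaugmentation I ≫ f 0 = g ≫ coaugmentation E)
    (hf : ∀ i, f i ≫ E.cocomplex.d i (i + 1) = I.cocomplex.d i (i + 1) ≫ f (i + 1)) :
    ∃ φ : InjectiveResolution.Hom I E g, ∀ i, φ.hom.f i = f i :=
  ⟨{ hom := { f := f, comm' := by rintro i _ rfl; exact hf i }
     ι_f_zero_comp_hom_f_zero := by simpa using! hf₀ }, fun _ ↦ rfl⟩

theorem exists_twisted_desc {Z : A} (I : InjectiveResolution Z) {J : ℕ → A}
    [∀ i, Injective (J i)] {d : ∀ i, J i ⟶ J (i + 1)} (hd : ∀ i, d i ≫ d (i + 1) = 0)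
    {ρ : ∀ i, I.cocomplex.X i ⟶ J (i + 1)}
    (hρ : ∀ i, I.cocomplex.d i (i + 1) ≫ ρ (i + 1) = -(ρ i ≫ d (i + 1)))
    {v : Z ⟶ J 0} (hv : coaugmentation I ≫ ρ 0 = v ≫ d 0) :
    ∃ g : ∀ i, I.cocomplex.X i ⟶ J i, coaugmentation I ≫ g 0 = v ∧
      ∀ i, g i ≫ d i = I.cocomplex.d i (i + 1) ≫ g (i + 1) + ρ i := by
  have succ (i : ℕ) (f : I.cocomplex.X i ⟶ J i) (f' : I.cocomplex.X (i + 1) ⟶ J (i + 1))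
      (h : f ≫ d i = I.cocomplex.d i (i + 1) ≫ f' + ρ i) :
      ∃ f'' : I.cocomplex.X (i + 2) ⟶ J (i + 2),
        f' ≫ d (i + 1) = I.cocomplex.d (i + 1) (i + 2) ≫ f'' + ρ (i + 1) := by
    have hzero : I.cocomplex.d i (i + 1) ≫ (f' ≫ d (i + 1) - ρ (i + 1)) = 0 := by
      rw [Preadditive.comp_sub, hρ, sub_neg_eq_add, ← Category.assoc, ← Preadditive.add_comp, ← h,
        Category.assoc, hd, Limits.comp_zero]
    exact ⟨(I.exact_succ i).descToInjective _ hzero,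
      eq_add_of_sub_eq ((I.exact_succ i).comp_descToInjective _ hzero).symm⟩
  choose! next hnext using succ
  let g₀ : I.cocomplex.X 0 ⟶ J 0 := Injective.factorThru v (coaugmentation I)
  have hg₀ : coaugmentation I ≫ g₀ = v := Injective.comp_factorThru v (coaugmentation I)
  have hzero : coaugmentation I ≫ (g₀ ≫ d 0 - ρ 0) = 0 := by
    rw [Preadditive.comp_sub, hv, ← Category.assoc, hg₀, sub_self]
  let g₁ : I.cocomplex.X 1 ⟶ J 1 := (coaugmentation_exact I).descToInjective _ hzero
  have hg₁ : g₀ ≫ d 0 = I.cocomplex.d 0 1 ≫ g₁ + ρ 0 :=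
    eq_add_of_sub_eq ((coaugmentation_exact I).comp_descToInjective _ hzero).symm
  let pairs (i : ℕ) : {f : (I.cocomplex.X i ⟶ J i) × (I.cocomplex.X (i + 1) ⟶ J (i + 1)) //
      f.1 ≫ d i = I.cocomplex.d i (i + 1) ≫ f.2 + ρ i} :=
    Nat.rec ⟨(g₀, g₁), hg₁⟩ (fun i f ↦ ⟨(f.1.2, next i f.1.1 f.1.2), hnext i _ _ f.2⟩) i
  exact ⟨fun i ↦ (pairs i).1.1, hg₀, fun i ↦ (pairs i).2⟩

variable {S : ShortComplex A} (hS : S.ShortExact)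
  {I₁ : InjectiveResolution S.X₁} {I₃ : InjectiveResolution S.X₃}

include hS in
/-- Horseshoe lemma: `I₁ⁱ ⊕ I₃ⁱ` with differential `(x, z) ↦ (d x - σ z, d z)` and coaugmentation
`(s, S.g ≫ coaugmentation I₃)` is an injective resolution of `S.X₂`. -/
theorem exists_horseshoe (I₁ : InjectiveResolution S.X₁) (I₃ : InjectiveResolution S.X₃) :
    ∃ (s : S.X₂ ⟶ I₁.cocomplex.X 0) (σ : ∀ i, I₃.cocomplex.X i ⟶ I₁.cocomplex.X (i + 1)),
      S.f ≫ s = coaugmentation I₁ ∧ S.g ≫ coaugmentation I₃ ≫ σ 0 = s ≫ I₁.cocomplex.d 0 1 ∧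
      ∀ i, σ i ≫ I₁.cocomplex.d (i + 1) (i + 2) = -(I₃.cocomplex.d i (i + 1) ≫ σ (i + 1)) := by
  have := hS.mono_f
  have := hS.epi_g
  let s : S.X₂ ⟶ I₁.cocomplex.X 0 := Injective.factorThru (coaugmentation I₁) S.f
  have hs : S.f ≫ s = coaugmentation I₁ := Injective.comp_factorThru _ _
  have hzero : S.f ≫ s ≫ I₁.cocomplex.d 0 1 = 0 := by
    rw [← Category.assoc, hs, coaugmentation_comp_d]
  let τ : S.X₃ ⟶ I₁.cocomplex.X 1 := hS.exact.descToInjective _ hzero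
  have hτ : S.g ≫ τ = s ≫ I₁.cocomplex.d 0 1 := hS.exact.comp_descToInjective _ hzero
  have hτd : τ ≫ I₁.cocomplex.d 1 2 = 0 := by
    rw [← cancel_epi S.g, ← Category.assoc, hτ, Category.assoc, I₁.complex_d_comp,
      Limits.comp_zero, Limits.comp_zero]
  obtain ⟨σ, hσ₀, hσ⟩ := exists_twisted_desc I₃ (J := fun i ↦ I₁.cocomplex.X (i + 1))
    (d := fun i ↦ -I₁.cocomplex.d (i + 1) (i + 2)) (ρ := 0) (v := τ)
    (by simp) (by simp) (by simp [hτd])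
  exact ⟨s, σ, hs, by rw [hσ₀, hτ], fun i ↦ by simpa [neg_eq_iff_eq_neg] using hσ i⟩

include hS in
/-- The pair `(φ, π)` is the lift of `c` to the horseshoe resolution. -/
theorem exists_horseshoe_desc {s : S.X₂ ⟶ I₁.cocomplex.X 0}
    {σ : ∀ i, I₃.cocomplex.X i ⟶ I₁.cocomplex.X (i + 1)} (hs : S.f ≫ s = coaugmentation I₁)
    (hσ₀ : S.g ≫ coaugmentation I₃ ≫ σ 0 = s ≫ I₁.cocomplex.d 0 1)
    (hσ : ∀ i, σ i ≫ I₁.cocomplex.d (i + 1) (i + 2) = -(I₃.cocomplex.d i (i + 1) ≫ σ (i + 1)))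
    {Q : A} {E : InjectiveResolution Q} {c : S.X₂ ⟶ Q}
    (φ : InjectiveResolution.Hom I₁ E (S.f ≫ c)) :
    ∃ π : ∀ i, I₃.cocomplex.X i ⟶ E.cocomplex.X i,
      S.g ≫ coaugmentation I₃ ≫ π 0 = c ≫ coaugmentation E - s ≫ φ.hom.f 0 ∧
      ∀ i, π i ≫ E.cocomplex.d i (i + 1) =
        I₃.cocomplex.d i (i + 1) ≫ π (i + 1) - σ i ≫ φ.hom.f (i + 1) := by
  have := hS.epi_g
  have hφ : coaugmentation I₁ ≫ φ.hom.f 0 = S.f ≫ c ≫ coaugmentation E := by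
    rw [coaugmentation_comp_hom, Category.assoc]
  have hzero : S.f ≫ (c ≫ coaugmentation E - s ≫ φ.hom.f 0) = 0 := by
    rw [Preadditive.comp_sub, ← Category.assoc S.f s, hs, hφ, sub_self]
  let u : S.X₃ ⟶ E.cocomplex.X 0 := hS.exact.descToInjective _ hzero
  have hu : S.g ≫ u = c ≫ coaugmentation E - s ≫ φ.hom.f 0 := hS.exact.comp_descToInjective _ hzero
  have hud : coaugmentation I₃ ≫ (-(σ 0 ≫ φ.hom.f 1)) = u ≫ E.cocomplex.d 0 1 := by
    rw [← cancel_epi S.g, ← Category.assoc S.g u, hu, Preadditive.sub_comp, Category.assoc c,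
      coaugmentation_comp_d, Preadditive.comp_neg, Preadditive.comp_neg,
      Category.assoc s, φ.hom.comm, ← Category.assoc s, ← hσ₀]
    simp
  obtain ⟨π, hπ₀, hπ⟩ := exists_twisted_desc I₃ (J := E.cocomplex.X)
    (d := fun i ↦ E.cocomplex.d i (i + 1)) (ρ := fun i ↦ -(σ i ≫ φ.hom.f (i + 1)))
    (v := u) (by simp) (fun i ↦ by simpa using (hσ i =≫ φ.hom.f (i + 2)).symm) hud
  exact ⟨π, by rw [hπ₀, hu], fun i ↦ by rw [hπ, sub_eq_add_neg]⟩

end Resolutions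

section LinearLifts

variable {R : Type u} [CommRing R]

/-- The lift of `g : P ⟶ R` to the injective resolutions `I` and `E` can be chosen linear in the
values of `g` at finitely many `x l`, by means of fixed maps `π l` that are not required to commute
with the differentials. If `g` maps into the annihilator of `X`, its lift is then zero after any
map from `X`. -/
def HasLinearLifts {P : ModuleCat.{u} R} (I : InjectiveResolution P)
    (E : InjectiveResolution (ModuleCat.of R R)) : Prop :=
  ∃ (b : ℕ) (x : Fin b → P) (π : Fin b → ∀ i, I.cocomplex.X i ⟶ E.cocomplex.X i),
    ∀ g : P ⟶ ModuleCat.of R R, ∃ φ : InjectiveResolution.Hom I E g,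
      ∀ i, φ.hom.f i = ∑ l, g.hom (x l) • π l i

theorem sum_smul_ofHom_coord {F : ModuleCat.{u} R} {b : ℕ} (e : Module.Basis (Fin b) R F)
    (g : F ⟶ ModuleCat.of R R) : ∑ l, g.hom (e l) • ModuleCat.ofHom (e.coord l) = g := by
  ext x
  conv_rhs => rw [← e.sum_repr x]
  simp [ModuleCat.hom_sum]

theorem HasLinearLifts.of_projective {P : ModuleCat.{u} R} [Module.Finite R P]
    [Module.Projective R P] (I : InjectiveResolution P)
    (E : InjectiveResolution (ModuleCat.of R R)) : HasLinearLifts I E := by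
  obtain ⟨b, q, s, -, -, hqs⟩ := Module.Finite.exists_comp_eq_id_of_projective R P
  let e := Pi.basisFun R (Fin b)
  let c (l : Fin b) : P ⟶ ModuleCat.of R R := ModuleCat.ofHom (e.coord l ∘ₗ s)
  refine ⟨b, fun l ↦ q (e l), fun l ↦ (InjectiveResolution.desc (c l) E I).f,
    fun g ↦ exists_injectiveResolution_hom _ ?_ ?_⟩
  · have hg : ∑ l, g.hom (q (e l)) • c l = g := by
      have h := sum_smul_ofHom_coord e (ModuleCat.ofHom q ≫ g)
      have hs : ModuleCat.ofHom s ≫ ModuleCat.ofHom q ≫ g = g := by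
        rw [← Category.assoc, ← ModuleCat.ofHom_comp, hqs, ModuleCat.ofHom_id, Category.id_comp]
      rw [← h, Preadditive.comp_sum] at hs
      exact hs
    have hc (l : Fin b) : coaugmentation I ≫ (InjectiveResolution.desc (c l) E I).f 0 =
        c l ≫ coaugmentation E := InjectiveResolution.desc_commutes_zero _ _ _
    conv_rhs => rw [← hg]
    simp [Preadditive.comp_sum, Preadditive.sum_comp, hc]
  · intro i
    simp [Preadditive.sum_comp, Preadditive.comp_sum]

theorem HasLinearLifts.of_shortExact {S : ShortComplex (ModuleCat.{u} R)} (hS : S.ShortExact)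
    {b : ℕ} (e : Module.Basis (Fin b) R S.X₂) {I₁ : InjectiveResolution S.X₁}
    {E : InjectiveResolution (ModuleCat.of R R)} (h : HasLinearLifts I₁ E)
    (I₃ : InjectiveResolution S.X₃) : HasLinearLifts I₃ E := by
  have := hS.epi_g
  obtain ⟨r, x, κ, hκ⟩ := h
  obtain ⟨s, σ, hs, hσ₀, hσ⟩ := exists_horseshoe hS I₁ I₃
  let c (l : Fin b) : S.X₂ ⟶ ModuleCat.of R R := ModuleCat.ofHom (e.coord l)
  choose φ hφ using fun l ↦ hκ (S.f ≫ c l)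
  choose π hπ₀ hπ using fun l ↦ exists_horseshoe_desc hS hs hσ₀ hσ (φ l)
  have hc (g : S.X₃ ⟶ ModuleCat.of R R) : ∑ l, g.hom (S.g.hom (e l)) • c l = S.g ≫ g :=
    sum_smul_ofHom_coord e (S.g ≫ g)
  have hφ_zero (g : S.X₃ ⟶ ModuleCat.of R R) {Y : ModuleCat.{u} R} (i : ℕ)
      (f : Y ⟶ I₁.cocomplex.X i) : ∑ l, g.hom (S.g.hom (e l)) • f ≫ (φ l).hom.f i = 0 := by
    have hzero : S.f ≫ ∑ l, g.hom (S.g.hom (e l)) • c l = 0 := by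
      rw [hc, S.zero_assoc, Limits.zero_comp]
    simp only [← Linear.comp_smul, ← Preadditive.comp_sum, hφ, Finset.smul_sum, smul_smul]
    rw [Finset.sum_comm, Finset.sum_eq_zero, Limits.comp_zero]
    intro j _
    simpa [← Finset.sum_smul, ModuleCat.hom_sum] using congr($hzero (x j) • κ j i)
  refine ⟨b, fun l ↦ S.g.hom (e l), π, fun g ↦ exists_injectiveResolution_hom _ ?_ fun i ↦ ?_⟩
  · rw [← cancel_epi S.g]
    simp only [Preadditive.comp_sum, Linear.comp_smul, hπ₀, smul_sub, Finset.sum_sub_distrib,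
      hφ_zero, sub_zero]
    simp only [← Linear.smul_comp, ← Preadditive.sum_comp, hc, Category.assoc]
  · simp only [Preadditive.sum_comp, Linear.smul_comp, hπ, smul_sub, Finset.sum_sub_distrib,
      hφ_zero, sub_zero, Preadditive.comp_sum, Linear.comp_smul]

theorem hasLinearLifts_of_hasProjectiveDimensionLT [IsNoetherianRing R] (n : ℕ)
    (P : ModuleCat.{u} R) [Module.Finite R P] [HasProjectiveDimensionLT P (n + 1)]
    (I : InjectiveResolution P) (E : InjectiveResolution (ModuleCat.of R R)) :
    HasLinearLifts I E := by
  induction n generalizing P with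
  | zero =>
    have : Projective P := projective_iff_hasProjectiveDimensionLT_one.2 inferInstance
    have : Module.Projective R P := (IsProjective.iff_projective P).2 this
    exact .of_projective I E
  | succ n ih =>
    obtain ⟨b, q, hq⟩ := Module.Finite.exists_fin' R P
    have hS := LinearMap.shortExact_shortComplexKer hq
    have : Projective q.shortComplexKer.X₂ := ModuleCat.projective_of_free (Pi.basisFun R (Fin b))
    have : HasProjectiveDimensionLT q.shortComplexKer.X₁ (n + 1) :=
      (hS.hasProjectiveDimensionLT_X₃_iff n this).1 ‹_›
    exact .of_shortExact hS (Pi.basisFun R (Fin b))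
      (ih q.shortComplexKer.X₁ (injectiveResolution _)) I

theorem ext_comp_mk₀_eq_zero_of_mem_annihilator [IsNoetherianRing R] {n : ℕ} {X P : ModuleCat.{u} R}
    [Module.Finite R P] [HasProjectiveDimensionLT P (n + 1)] (g : P ⟶ ModuleCat.of R R)
    (hg : ∀ x, g.hom x ∈ Module.annihilator R X) {j : ℕ} (ξ : Abelian.Ext X P j) :
    ξ.comp (Abelian.Ext.mk₀ g) (add_zero j) = 0 := by
  obtain ⟨b, x, π, hπ⟩ := hasLinearLifts_of_hasProjectiveDimensionLT n P (injectiveResolution P)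
    (injectiveResolution (ModuleCat.of R R))
  obtain ⟨φ, hφ⟩ := hπ g
  obtain ⟨f, hf, rfl⟩ := (injectiveResolution P).extMk_surjective ξ (j + 1) rfl
  have : f ≫ φ.hom.f j = 0 := by
    rw [hφ, Preadditive.comp_sum]
    refine Finset.sum_eq_zero fun l _ ↦ ?_
    ext y
    simp [← map_smul, Module.mem_annihilator.1 (hg (x l)) y]
  simp [InjectiveResolution.extMk_comp_mk₀ f (j + 1) rfl hf φ, this]

end LinearLifts

section ResidueField

variable {R : Type u} [CommRing R] [IsLocalRing R]

open IsLocalRing Abelian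

theorem exists_surjective_residueField (M : Type*) [AddCommGroup M]
    [Module R M] [Module.Finite R M] [Nontrivial M] :
    ∃ p : M →ₗ[R] R ⧸ maximalIdeal R, Function.Surjective p := by
  obtain ⟨L, hL⟩ := IsCoatomic.exists_coatom (Submodule R M)
  obtain ⟨I, hI, ⟨e⟩⟩ := isSimpleModule_iff_quot_maximal.1 (isSimpleModule_iff_isCoatom.2 hL)
  obtain rfl := eq_maximalIdeal hI
  exact ⟨e.toLinearMap ∘ₗ L.mkQ, e.surjective.comp L.mkQ_surjective⟩

theorem exists_surjective_map_ker_le_maximalIdeal {F M : Type*} [AddCommGroup F]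
    [Module R F] [Module.Projective R F] [AddCommGroup M] [Module R M] [Module.Finite R M]
    [Nontrivial M] {q : F →ₗ[R] M} (hq : Function.Surjective q) :
    ∃ w : F →ₗ[R] R, (∃ y, w y = 1) ∧ q.ker.map w ≤ maximalIdeal R := by
  obtain ⟨p, hp⟩ := exists_surjective_residueField (R := R) M
  obtain ⟨w, hw⟩ := Module.projective_lifting_property (maximalIdeal R).mkQ (p ∘ₗ q)
    (Submodule.mkQ_surjective _)
  have hw_mk (x : F) : (Ideal.Quotient.mk (maximalIdeal R) (w x)) = p (q x) := congr($hw x)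
  refine ⟨w, ?_, ?_⟩
  · obtain ⟨y, hy⟩ := (hp.comp hq) 1
    have hunit : IsUnit (w y) := by
      rw [← residue_ne_zero_iff_isUnit]
      exact ((hw_mk y).trans hy).trans_ne (one_ne_zero (α := ResidueField R))
    exact ⟨hunit.unit⁻¹ • y, by simp [Units.smul_def]⟩
  · rintro _ ⟨x, hx, rfl⟩
    rw [← Ideal.Quotient.eq_zero_iff_mem, hw_mk, LinearMap.mem_ker.1 hx, map_zero]

variable [IsNoetherianRing R]

theorem subsingleton_ext_residueField_self {M : ModuleCat.{u} R} [Module.Finite R M] [Nontrivial M]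
    {n : ℕ} [HasProjectiveDimensionLT M n] {j : ℕ}
    [Subsingleton (Ext (ModuleCat.of R (R ⧸ maximalIdeal R)) M j)] :
    Subsingleton (Ext (ModuleCat.of R (R ⧸ maximalIdeal R)) (ModuleCat.of R R) j) := by
  obtain ⟨b, q, hq⟩ := Module.Finite.exists_fin' R M
  obtain ⟨w, ⟨y, hy⟩, hw⟩ := exists_surjective_map_ker_le_maximalIdeal hq
  let S := q.shortComplexKer
  have hS : S.ShortExact := LinearMap.shortExact_shortComplexKer hq
  have : HasProjectiveDimensionLT S.X₁ (n + 1) :=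
    hS.hasProjectiveDimensionLT_X₁ (n + 1)
      (hasProjectiveDimensionLT_of_ge _ 1 _ (by lia))
      (hasProjectiveDimensionLT_of_ge _ n _ (by lia))
  let v : ModuleCat.of R R ⟶ S.X₂ := ModuleCat.ofHom (LinearMap.toSpanSingleton R _ y)
  have hvw : v ≫ ModuleCat.ofHom w = 𝟙 _ := by
    ext
    simpa [v] using! hy
  refine subsingleton_of_forall_eq 0 fun ζ ↦ ?_
  obtain ⟨ξ, hξ⟩ := Ext.covariant_sequence_exact₂ _ hS (ζ.comp (Ext.mk₀ v) (add_zero j))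
    (Subsingleton.elim _ _)
  have hξw : ξ.comp (Ext.mk₀ (S.f ≫ ModuleCat.ofHom w)) (add_zero j) = 0 := by
    refine ext_comp_mk₀_eq_zero_of_mem_annihilator (n := n) _ (fun x ↦ ?_) ξ
    rw [Ideal.annihilator_quotient]
    exact hw ⟨x, x.2, rfl⟩
  calc ζ = (ζ.comp (Ext.mk₀ v) (add_zero j)).comp (Ext.mk₀ (ModuleCat.ofHom w)) (add_zero j) := by
        simp [hvw]
    _ = 0 := by
        rw [← hξ, Ext.comp_assoc_of_third_deg_zero, Ext.mk₀_comp_mk₀, hξw]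

end ResidueField

/-! ### The unit of the tensor-hom adjunction -/

section InjectiveModules

variable {R : Type*} [CommRing R] {A B D : Type*} [AddCommGroup A] [Module R A] [AddCommGroup B]
  [Module R B] [AddCommGroup D] [Module R D] {I : Type w} [AddCommGroup I] [Module R I]
  [Small.{w} R] [Module.Injective R I] {f : A →ₗ[R] B} {g : B →ₗ[R] D}

theorem exists_comp_eq_of_ker_le_of_injective {φ : A →ₗ[R] I} (h : f.ker ≤ φ.ker) :
    ∃ ψ : B →ₗ[R] I, ψ ∘ₗ f = φ := by
  obtain ⟨ψ, hψ⟩ := Module.Injective.extension_property R I _ _ (f.ker.liftQ f le_rfl)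
    (LinearMap.ker_eq_bot.1 (Submodule.ker_liftQ_eq_bot _ _ _ le_rfl)) (f.ker.liftQ φ h)
  exact ⟨ψ, LinearMap.ext fun x ↦ congr($hψ (Submodule.Quotient.mk x))⟩

theorem exact_lcomp_of_injective (hfg : Function.Exact f g) :
    Function.Exact (LinearMap.lcomp R I g) (LinearMap.lcomp R I f) := by
  refine fun φ ↦ ⟨fun hφ ↦ exists_comp_eq_of_ker_le_of_injective fun x hx ↦ ?_, ?_⟩
  · obtain ⟨y, rfl⟩ := (hfg x).1 hx
    exact congr($hφ y)
  · rintro ⟨ψ, rfl⟩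
    ext x
    simp [hfg.apply_apply_eq_zero]

end InjectiveModules

section HomEvaluation

variable (R : Type u) [CommRing R] (N C : Type*) [AddCommGroup N] [Module R N]
  [AddCommGroup C] [Module R C] (I : Type*) [AddCommGroup I] [Module R I]

/-- The Hom-evaluation map `N ⊗ Hom(C, I) → Hom(Hom(N, C), I)`, `n ⊗ f ↦ (g ↦ f (g n))`. It is
bijective for `N` finitely presented and `I` injective, and expresses `- ⊗ Hom(C, I)` in terms of
`Hom(-, C)`. -/
noncomputable def homEvaluation : N ⊗[R] (C →ₗ[R] I) →ₗ[R] (N →ₗ[R] C) →ₗ[R] I :=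
  TensorProduct.lift ((LinearMap.llcomp R (N →ₗ[R] C) C I).flip ∘ₗ LinearMap.applyₗ)

variable {R N C I}

@[simp]
theorem homEvaluation_tmul (n : N) (f : C →ₗ[R] I) (g : N →ₗ[R] C) :
    homEvaluation R N C I (n ⊗ₜ f) g = f (g n) := rfl

theorem homEvaluation_comp_rTensor {N' : Type*} [AddCommGroup N'] [Module R N'] (h : N →ₗ[R] N') :
    homEvaluation R N' C I ∘ₗ h.rTensor (C →ₗ[R] I) =
      LinearMap.lcomp R I (LinearMap.lcomp R C h) ∘ₗ homEvaluation R N C I := by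
  ext
  simp

theorem homEvaluation_pi_bijective (ι : Type*) [Finite ι] :
    Function.Bijective (homEvaluation R (ι → R) C I) := by
  classical
  have := Fintype.ofFinite ι
  let e : (ι → R) ⊗[R] (C →ₗ[R] I) ≃ₗ[R] ((ι → R) →ₗ[R] C) →ₗ[R] I :=
    TensorProduct.comm R _ _ ≪≫ₗ TensorProduct.piScalarRight R R (C →ₗ[R] I) ι ≪≫ₗ
      LinearMap.lsum R (fun _ ↦ C) R ≪≫ₗ LinearEquiv.congrLeft I R (Module.piEquiv ι R C)
  have he : homEvaluation R (ι → R) C I = e := by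
    refine TensorProduct.ext' fun r f ↦ LinearMap.ext fun g ↦ ?_
    obtain ⟨c, rfl⟩ := (Module.piEquiv ι R C).surjective g
    simp [e, LinearEquiv.congrLeft, Module.piEquiv_apply_apply]
  rw [he]
  exact e.bijective

variable {I : Type u} [AddCommGroup I] [Module R I] [Module.Injective R I]

theorem homEvaluation_surjective [Module.Finite R N] :
    Function.Surjective (homEvaluation R N C I) := by
  obtain ⟨n, π, hπ⟩ := Module.Finite.exists_fin' R N
  have hlift : Function.Surjective (LinearMap.lcomp R I (LinearMap.lcomp R C π)) :=
    Module.Injective.extension_property R I _ _ _ (LinearMap.lcomp_injective_of_surjective π hπ)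
  have h := hlift.comp (homEvaluation_pi_bijective (Fin n)).2
  rw [← LinearMap.coe_comp, ← homEvaluation_comp_rTensor, LinearMap.coe_comp] at h
  exact h.of_comp

theorem homEvaluation_bijective [IsNoetherianRing R] [Module.Finite R N] :
    Function.Bijective (homEvaluation R N C I) := by
  obtain ⟨n, π, hπ⟩ := Module.Finite.exists_fin' R N
  have hexact := LinearMap.exact_subtype_ker_map π
  have hker : Function.Surjective (homEvaluation R π.ker C I) := homEvaluation_surjective
  have hdual := exact_lcomp_of_injective (I := I)
    (LinearMap.exact_lcomp_of_exact_of_surjective C hexact hπ)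
  have hdual_surjective : Function.Surjective (LinearMap.lcomp R I (LinearMap.lcomp R C π)) :=
    Module.Injective.extension_property R I _ _ _ (LinearMap.lcomp_injective_of_surjective π hπ)
  exact LinearMap.bijective_of_surjective_of_bijective_of_right_exact _ _ _ _ _ _ _
    (homEvaluation_comp_rTensor _).symm (homEvaluation_comp_rTensor _).symm
    (rTensor_exact _ hexact hπ) hdual hker (homEvaluation_pi_bijective (Fin n))
    (LinearMap.rTensor_surjective _ hπ) hdual_surjective

end HomEvaluation

section TensorHomUnit

variable (R : Type*) [CommRing R] (C M : Type*) [AddCommGroup C] [Module R C]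
  [AddCommGroup M] [Module R M]

/-- The unit `M → Hom(C, C ⊗ M)`, `m ↦ (c ↦ c ⊗ m)`, of the tensor-hom adjunction. -/
noncomputable def tensorHomUnit : M →ₗ[R] C →ₗ[R] C ⊗[R] M :=
  (TensorProduct.mk R C M).flip

variable {R C M}

@[simp]
theorem tensorHomUnit_apply (m : M) (c : C) : tensorHomUnit R C M m c = c ⊗ₜ m := rfl

theorem tensorHomUnit_comp {M' : Type*} [AddCommGroup M'] [Module R M'] (f : M →ₗ[R] M') :
    tensorHomUnit R C M' ∘ₗ f = (f.lTensor C).compRight R ∘ₗ tensorHomUnit R C M := by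
  ext
  simp

theorem tensorHomUnit_bijective_of_equiv {M' : Type*} [AddCommGroup M'] [Module R M']
    (e : M ≃ₗ[R] M') (h : Function.Bijective (tensorHomUnit R C M')) :
    Function.Bijective (tensorHomUnit R C M) := by
  have hcomp := h.comp e.bijective
  rw [← LinearEquiv.coe_coe, ← LinearMap.coe_comp, tensorHomUnit_comp, LinearMap.coe_comp] at hcomp
  exact ((LinearEquiv.congrRight (TensorProduct.congr (.refl R C) e)).bijective.of_comp_iff' _).1
    hcomp

theorem exact_compRight_of_injective {X A B D : Type*} [AddCommGroup X] [Module R X]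
    [AddCommGroup A] [Module R A] [AddCommGroup B] [Module R B] [AddCommGroup D] [Module R D]
    {f : A →ₗ[R] B} {g : B →ₗ[R] D} (hf : Function.Injective f) (hfg : Function.Exact f g) :
    Function.Exact (f.compRight R : (X →ₗ[R] A) →ₗ[R] X →ₗ[R] B)
      (g.compRight R : (X →ₗ[R] B) →ₗ[R] X →ₗ[R] D) := by
  refine fun φ ↦ ⟨fun hφ ↦ ?_, ?_⟩
  · have hrange (x : X) : φ x ∈ f.range := (hfg _).1 congr($hφ x)
    exact ⟨(LinearEquiv.ofInjective f hf).symm.toLinearMap ∘ₗ φ.codRestrict _ hrange,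
      LinearMap.ext fun x ↦ by simp⟩
  · rintro ⟨ψ, rfl⟩
    exact LinearMap.ext fun x ↦ hfg.apply_apply_eq_zero (ψ x)

theorem tensorHomUnit_bijective_of_exact {A B D : Type*} [AddCommGroup A] [Module R A]
    [AddCommGroup B] [Module R B] [AddCommGroup D] [Module R D] {f : A →ₗ[R] B} {g : B →ₗ[R] D}
    (hf : Function.Injective f) (hfg : Function.Exact f g) (hg : Function.Surjective g)
    (hfC : Function.Injective (f.lTensor C)) (hB : Function.Bijective (tensorHomUnit R C B))
    (hD : Function.Injective (tensorHomUnit R C D)) :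
    Function.Bijective (tensorHomUnit R C A) :=
  LinearMap.bijective_of_bijective_of_injective_of_left_exact f g _ _ _ _ _
    (tensorHomUnit_comp f).symm (tensorHomUnit_comp g).symm hfg
    (exact_compRight_of_injective hfC (lTensor_exact C hfg hg)) hB hD hf
    (fun _ _ h ↦ LinearMap.ext fun c ↦ hfC congr($h c))

end TensorHomUnit

section TensorHomUnitHom

variable {R : Type u} [CommRing R] [IsNoetherianRing R] {C : Type*} [AddCommGroup C] [Module R C]
  [Module.Finite R C] (hC : Function.Bijective (LinearMap.lsmul R C))
  (I : Type u) [AddCommGroup I] [Module R I] [Module.Injective R I]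
include hC

theorem evaluation_bijective_of_injective :
    Function.Bijective (TensorProduct.lift (LinearMap.applyₗ : C →ₗ[R] (C →ₗ[R] I) →ₗ[R] I)) := by
  let e := (LinearEquiv.ofBijective (LinearMap.lsmul R C) hC).symm.congrLeft I R ≪≫ₗ
    LinearMap.ringLmapEquivSelf R R I
  have he : TensorProduct.lift (LinearMap.applyₗ : C →ₗ[R] (C →ₗ[R] I) →ₗ[R] I) =
      e.toLinearMap ∘ₗ homEvaluation R C C I := by
    ext
    simp [e, LinearEquiv.congrLeft]
  rw [he]
  exact e.bijective.comp homEvaluation_bijective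

theorem tensorHomUnit_hom_bijective : Function.Bijective (tensorHomUnit R C (C →ₗ[R] I)) := by
  let e := LinearEquiv.ofBijective _ (evaluation_bijective_of_injective hC I)
  have he : tensorHomUnit R C (C →ₗ[R] I) = (e.congrRight (M := C)).symm := by
    ext f : 1
    rw [LinearEquiv.coe_coe, LinearEquiv.eq_symm_apply]
    ext
    simp [e, LinearEquiv.congrRight]
  rw [he]
  exact LinearEquiv.bijective _

end TensorHomUnitHom

section CharacterModules

open Abelian

variable {R : Type u} [CommRing R]

theorem characterModule_dual_exact {A B D : Type*} [AddCommGroup A] [Module R A] [AddCommGroup B]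
    [Module R B] [AddCommGroup D] [Module R D] {f : A →ₗ[R] B} {g : B →ₗ[R] D}
    (hfg : Function.Exact f g) :
    Function.Exact (CharacterModule.dual g) (CharacterModule.dual f) := by
  have : Module.Injective ℤ (AddCircle (1 : ℚ)) := (Module.Baer.of_divisible _).injective
  intro χ
  constructor
  · intro hχ
    obtain ⟨ψ, hψ⟩ := exists_comp_eq_of_ker_le_of_injective (f := g.toAddMonoidHom.toIntLinearMap)
      (φ := AddMonoidHom.toIntLinearMap χ) fun x hx ↦ by
        obtain ⟨y, rfl⟩ := (hfg x).1 hx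
        exact DFunLike.congr_fun hχ y
    exact ⟨ψ.toAddMonoidHom, DFunLike.ext _ _ fun x ↦ congr($hψ x)⟩
  · rintro ⟨ψ, rfl⟩
    refine DFunLike.ext _ _ fun x ↦ ?_
    change ψ (g (f x)) = 0
    rw [hfg.apply_apply_eq_zero, map_zero]

variable {A B D C : Type u} [AddCommGroup A] [Module R A] [AddCommGroup B] [Module R B]
  [AddCommGroup D] [Module R D] [AddCommGroup C] [Module R C] {f : A →ₗ[R] B} {g : B →ₗ[R] D}

theorem characterModule_dual_shortExact (hf : Function.Injective f) (hfg : Function.Exact f g)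
    (hg : Function.Surjective g) :
    (ModuleCat.shortComplexOfCompEqZero (CharacterModule.dual g) (CharacterModule.dual f)
      (characterModule_dual_exact hfg).linearMap_comp_eq_zero).ShortExact :=
  ModuleCat.shortComplex_shortExact _ (characterModule_dual_exact hfg)
    (CharacterModule.dual_injective_of_surjective _ hg)
    (CharacterModule.dual_surjective_of_injective _ hf)

theorem lTensor_injective_of_subsingleton_ext_characterModule (hf : Function.Injective f)
    (hfg : Function.Exact f g) (hg : Function.Surjective g)
    (h : Subsingleton (Ext (ModuleCat.of R C) (ModuleCat.of R (CharacterModule D)) 1)) :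
    Function.Injective (f.lTensor C) := by
  rw [← CharacterModule.dual_surjective_iff_injective]
  intro χ
  obtain ⟨k, hk⟩ := exists_comp_g_eq_of_subsingleton_ext
    (characterModule_dual_shortExact hf hfg hg) h (ModuleCat.ofHom (CharacterModule.curry χ))
  refine ⟨CharacterModule.uncurry k.hom, DFunLike.ext _ _ fun x ↦ ?_⟩
  induction x with
  | zero => simp
  | tmul c a => exact DFunLike.congr_fun congr($hk c) a
  | add x y hx hy => simp only [map_add, hx, hy]

/-- Over a noetherian ring, `Ext(N, Hom(C, I)⁺) ≅ Tor(N, Hom(C, I))⁺ ≅ Hom(Ext(N, C), I)⁺` for `N`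
finitely generated and `I` injective. -/
theorem subsingleton_ext_characterModule_hom [IsNoetherianRing R] (I : Type u) [AddCommGroup I]
    [Module R I] [Module.Injective R I] (N : Type u) [AddCommGroup N] [Module R N]
    [Module.Finite R N]
    (hN : ∀ j, Subsingleton (Ext (ModuleCat.of R N) (ModuleCat.of R C) (j + 1))) (i : ℕ) :
    Subsingleton
      (Ext (ModuleCat.of R N) (ModuleCat.of R (CharacterModule (C →ₗ[R] I))) (i + 1)) := by
  have hfree (n : ℕ) : Projective (ModuleCat.of R (Fin n → R)) :=
    ModuleCat.projective_of_free (Pi.basisFun R (Fin n))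
  induction i generalizing N with
  | zero =>
    obtain ⟨n, π, hπ⟩ := Module.Finite.exists_fin' R N
    have hS := LinearMap.shortExact_shortComplexKer hπ
    have hinj : Function.Injective (π.ker.subtype.rTensor (C →ₗ[R] I)) := by
      refine (injective_iff_map_eq_zero _).2 fun x hx ↦ homEvaluation_bijective.1 ?_
      ext g
      obtain ⟨g', hg'⟩ := exists_f_comp_eq_of_subsingleton_ext hS (hN 0) (ModuleCat.ofHom g)
      obtain rfl : g'.hom ∘ₗ π.ker.subtype = g := congr(($hg').hom)
      have hnat := congr($(homEvaluation_comp_rTensor (I := I) π.ker.subtype) x g'.hom)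
      rw [LinearMap.comp_apply, hx] at hnat
      exact hnat.symm.trans (by simp)
    have := hfree n
    refine subsingleton_ext_one_of_forall_exists_f_comp_eq hS
      (Ext.subsingleton_of_projective _ _ _) fun φ ↦ ?_
    obtain ⟨ψ, hψ⟩ := rTensor_injective_iff_lcomp_surjective.1 hinj φ.hom
    exact ⟨ModuleCat.ofHom ψ, ModuleCat.hom_ext hψ⟩
  | succ i ih =>
    obtain ⟨n, π, hπ⟩ := Module.Finite.exists_fin' R N
    have hS := LinearMap.shortExact_shortComplexKer hπ
    have := hfree n
    exact subsingleton_ext_from_X₃ hS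
      (ih π.ker fun j ↦
        subsingleton_ext_from_X₁ hS (Ext.subsingleton_of_projective _ _ _) (hN (j + 1)))
      (Ext.subsingleton_of_projective _ _ _)

theorem CidLE.subsingleton_ext_characterModule_and_tensorHomUnit_bijective {R C : Type}
    [CommRing R] [IsNoetherianRing R] [AddCommGroup C] [Module R C] (hC : IsSemidualizing R C)
    {n : ℕ} {M : Type} {iM : AddCommGroup M} {jM : Module R M} (hM : CidLE R C n M iM jM) :
    (∀ i, Subsingleton
      (Ext (ModuleCat.of R C) (ModuleCat.of R (CharacterModule M)) (i + 1))) ∧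
        Function.Bijective (tensorHomUnit R C M) := by
  have := hC.1
  have hext (I : Type) [AddCommGroup I] [Module R I] [Module.Injective R I] (i : ℕ) :
      Subsingleton
        (Ext (ModuleCat.of R C) (ModuleCat.of R (CharacterModule (C →ₗ[R] I))) (i + 1)) :=
    subsingleton_ext_characterModule_hom I C
      (fun j ↦ subsingleton_ext_of_subsingleton_extGroup (hC.2.2 _ j.succ_pos)) i
  induction n generalizing M with
  | zero =>
    obtain ⟨I, _, _, _, ⟨e⟩⟩ := hM
    refine ⟨fun i ↦ ?_, tensorHomUnit_bijective_of_equiv e (tensorHomUnit_hom_bijective hC.2.1 I)⟩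
    have e' := ((extFunctorObj (ModuleCat.of R C) (i + 1)).mapIso
      (CharacterModule.congr e.symm).toModuleIso).addCommGroupIsoToAddEquiv
    exact e'.toEquiv.subsingleton_congr.1 (hext I i)
  | succ n ih =>
    obtain ⟨I, _, _, f, _, hf, h⟩ := hM
    obtain ⟨hQ, hQunit⟩ := ih h
    have hexact := f.exact_map_mkQ_range
    have hmkQ := f.range.mkQ_surjective
    refine ⟨fun i ↦ ?_, tensorHomUnit_bijective_of_exact hf hexact hmkQ
      (lTensor_injective_of_subsingleton_ext_characterModule hf hexact hmkQ (hQ 0))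
      (tensorHomUnit_hom_bijective hC.2.1 I) hQunit.1⟩
    exact subsingleton_ext_to_X₃ (characterModule_dual_shortExact hf hexact hmkQ) (hext I i)
      (hQ (i + 1))

end CharacterModules

/-! ### Localization at a prime of the support -/

section LocallyCyclic

variable {R : Type*} [CommRing R] {C M : Type*} [AddCommGroup C] [Module R C]
  [AddCommGroup M] [Module R M] {p : PrimeSpectrum R}

theorem notMem_support_of_one_tmul_eq_zero [Module.Finite R M]
    (h : ∀ m : M, (1 : p.asIdeal.ResidueField) ⊗ₜ[R] m = 0) : p ∉ Module.support R M := by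
  rw [Module.mem_support_iff_nontrivial_residueField_tensorProduct, not_nontrivial_iff_subsingleton]
  refine subsingleton_of_forall_eq 0 fun z ↦ ?_
  induction z with
  | zero => rfl
  | tmul a m =>
    rw [← mul_one a, ← smul_eq_mul, ← TensorProduct.smul_tmul', h, smul_zero]
  | add x y hx hy => rw [hx, hy, add_zero]

theorem exists_one_tmul_apply_ne_zero [Module.Finite R M] {P : Type*} [AddCommGroup P] [Module R P]
    {f : C ⊗[R] P →ₗ[R] M} (hf : Function.Surjective f) (hp : p ∈ Module.support R M) :
    ∃ (φ : C →ₗ[R] M) (c : C), (1 : p.asIdeal.ResidueField) ⊗ₜ[R] φ c ≠ 0 := by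
  by_contra! H
  refine notMem_support_of_one_tmul_eq_zero (fun m ↦ ?_) hp
  obtain ⟨x, rfl⟩ := hf m
  induction x with
  | zero => simp
  | tmul c y => exact H (f ∘ₗ (TensorProduct.mk R C P).flip y) c
  | add x y hx hy => rw [map_add, TensorProduct.tmul_add, hx, hy, add_zero]

/-- The map `x ↦ c ⊗ φ x` is `x ↦ x ⊗ m` for some `m`; evaluate at `c₀` and contract `M` to the
residue field along a functional with value `1` at `φ c₀`. -/
theorem exists_one_tmul_eq_tmul (hM : Function.Surjective (tensorHomUnit R C M)) {φ : C →ₗ[R] M}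
    {c₀ : C} (hφ : (1 : p.asIdeal.ResidueField) ⊗ₜ[R] φ c₀ ≠ 0) (c : C) :
    ∃ a : p.asIdeal.ResidueField, (1 : p.asIdeal.ResidueField) ⊗ₜ[R] c = a ⊗ₜ[R] c₀ := by
  let κ := p.asIdeal.ResidueField
  obtain ⟨l, hl⟩ := Module.Projective.exists_dual_eq_one κ hφ
  let g : M →ₗ[R] κ := l.restrictScalars R ∘ₗ TensorProduct.mk R κ M 1
  have hg : g (φ c₀) = 1 := hl
  obtain ⟨m, hm⟩ := hM (TensorProduct.mk R C M c ∘ₗ φ)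
  have hc : c₀ ⊗ₜ[R] m = c ⊗ₜ[R] φ c₀ := congr($hm c₀)
  have hgc := congr(g.rTensor C (TensorProduct.comm R C M $hc))
  rw [TensorProduct.comm_tmul, TensorProduct.comm_tmul, LinearMap.rTensor_tmul,
    LinearMap.rTensor_tmul, hg] at hgc
  exact ⟨g m, hgc.symm⟩

theorem exists_smul_eq_smul_of_one_tmul_eq_tmul [Module.Finite R C] {c₀ : C}
    (h : ∀ c : C, ∃ a : p.asIdeal.ResidueField,
      (1 : p.asIdeal.ResidueField) ⊗ₜ[R] c = a ⊗ₜ[R] c₀) :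
    ∃ s ∉ p.asIdeal, ∀ c : C, ∃ r : R, r • c₀ = s • c := by
  have hsupport : p ∉ Module.support R (C ⧸ R ∙ c₀) := by
    refine notMem_support_of_one_tmul_eq_zero fun x ↦ ?_
    obtain ⟨c, rfl⟩ := Submodule.mkQ_surjective _ x
    obtain ⟨a, ha⟩ := h c
    have hmkQ := congr((R ∙ c₀).mkQ.lTensor p.asIdeal.ResidueField $ha)
    rw [LinearMap.lTensor_tmul, LinearMap.lTensor_tmul] at hmkQ
    rw [hmkQ, Submodule.mkQ_apply, (Submodule.Quotient.mk_eq_zero _).2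
      (Submodule.mem_span_singleton_self c₀), TensorProduct.tmul_zero]
  rw [Module.mem_support_iff_of_finite, SetLike.not_le_iff_exists] at hsupport
  obtain ⟨s, hs, hsp⟩ := hsupport
  refine ⟨s, hsp, fun c ↦ Submodule.mem_span_singleton.1 ?_⟩
  rw [← Submodule.Quotient.mk_eq_zero, Submodule.Quotient.mk_smul]
  exact Module.mem_annihilator.1 hs _

theorem exists_smul_eq_smul_of_tensorHomUnit_surjective [Module.Finite R C] [Module.Finite R M]
    (hM : Function.Surjective (tensorHomUnit R C M)) {P : Type*} [AddCommGroup P] [Module R P]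
    {f : C ⊗[R] P →ₗ[R] M} (hf : Function.Surjective f) (hp : p ∈ Module.support R M) :
    ∃ (c₀ : C), ∃ s ∉ p.asIdeal, ∀ c : C, ∃ r : R, r • c₀ = s • c := by
  obtain ⟨φ, c₀, hφ⟩ := exists_one_tmul_apply_ne_zero hf hp
  exact ⟨c₀, exists_smul_eq_smul_of_one_tmul_eq_tmul (exists_one_tmul_eq_tmul hM hφ)⟩

theorem exists_comp_eq_smul_id (hC : Function.Injective (LinearMap.lsmul R C)) {c₀ : C} {s : R}
    (h : ∀ c : C, ∃ r : R, r • c₀ = s • c) :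
    ∃ (j : R →ₗ[R] C) (j' : C →ₗ[R] R), j' ∘ₗ j = (s * s) • LinearMap.id ∧
      j ∘ₗ j' = (s * s) • LinearMap.id := by
  choose r hr using h
  have hzero (a : R) (ha : a • c₀ = 0) : s * a = 0 := by
    apply hC
    ext c
    simp only [LinearMap.lsmul_apply, map_zero, LinearMap.zero_apply]
    rw [mul_comm, mul_smul, ← hr, smul_comm, ha, smul_zero]
  have hcancel (a b : R) (hab : a • c₀ = b • c₀) : s * a = s * b := by
    rw [← sub_eq_zero, ← mul_sub]
    exact hzero _ (by rw [sub_smul, hab, sub_self])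
  let j' : C →ₗ[R] R :=
    { toFun c := s * r c
      map_add' c d := by
        rw [← mul_add]
        exact hcancel _ _ (by rw [add_smul, hr, hr, hr, smul_add])
      map_smul' a c := by
        rw [smul_eq_mul, RingHom.id_apply, mul_left_comm]
        exact hcancel _ _ (by rw [mul_smul, hr, hr, smul_comm]) }
  refine ⟨LinearMap.toSpanSingleton R C c₀, j', LinearMap.ext_ring ?_, ?_⟩
  · simpa [j'] using hcancel _ _ (hr c₀)
  · ext c
    simp [j', mul_smul, hr]

end LocallyCyclic

theorem CpdLE.exists_surjective {R C M : Type} [CommRing R] [AddCommGroup C] [Module R C] {n : ℕ}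
    {iM : AddCommGroup M} {jM : Module R M} (h : CpdLE R C n M iM jM) :
    ∃ (P : Type) (_ : AddCommGroup P) (_ : Module R P) (f : C ⊗[R] P →ₗ[R] M),
      Function.Surjective f := by
  cases n with
  | zero =>
    obtain ⟨P, _, _, -, ⟨e⟩⟩ := h
    exact ⟨P, _, _, e.toLinearMap, e.surjective⟩
  | succ n =>
    obtain ⟨P, _, _, f, -, hf, -⟩ := h
    exact ⟨P, _, _, f, hf⟩

section LocalizedModule

variable {R : Type*} [CommRing R] (T : Submonoid R) {A B : Type*} [AddCommGroup A] [Module R A]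
  [AddCommGroup B] [Module R B]

theorem localizedModule_map_map_eq_smul {f : A →ₗ[R] B} {g : B →ₗ[R] A} {t : R}
    (h : g ∘ₗ f = t • LinearMap.id) (x : LocalizedModule T A) :
    LocalizedModule.map T g (LocalizedModule.map T f x) = t • x := by
  induction x with
  | h m s =>
    rw [LocalizedModule.map_mk, LocalizedModule.map_mk, ← LinearMap.comp_apply, h,
      LinearMap.smul_apply, LinearMap.id_apply, LocalizedModule.smul'_mk]

theorem nonempty_localizedModule_equiv {f : A →ₗ[R] B} {g : B →ₗ[R] A} {t : R} (ht : t ∈ T)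
    (hgf : g ∘ₗ f = t • LinearMap.id) (hfg : f ∘ₗ g = t • LinearMap.id) :
    Nonempty (LocalizedModule T A ≃ₗ[Localization T] LocalizedModule T B) := by
  refine ⟨LinearEquiv.ofBijective (LocalizedModule.map T f) ⟨fun x y hxy ↦ ?_, fun y ↦ ?_⟩⟩
  · have hsmul := congr(LocalizedModule.map T g $hxy)
    rw [localizedModule_map_map_eq_smul T hgf, localizedModule_map_map_eq_smul T hgf] at hsmul
    exact IsLocalizedModule.smul_injective (LocalizedModule.mkLinearMap T A) ⟨t, ht⟩ hsmul
  · refine ⟨Localization.mk 1 ⟨t, ht⟩ • LocalizedModule.map T g y, ?_⟩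
    rw [map_smul, localizedModule_map_map_eq_smul T hfg]
    induction y with
    | h m s =>
      rw [LocalizedModule.smul'_mk, LocalizedModule.mk_smul_mk, one_smul]
      exact LocalizedModule.mk_cancel_common_left ⟨t, ht⟩ s m

end LocalizedModule

section LocalizedExact

variable {R : Type u} [CommRing R] (T : Submonoid R) {A B D : Type u} [AddCommGroup A]
  [Module R A] [AddCommGroup B] [Module R B] [AddCommGroup D] [Module R D] {f : A →ₗ[R] B}
  {g : B →ₗ[R] D}

theorem localizedModule_map_exact (hfg : Function.Exact f g) :
    Function.Exact (LocalizedModule.map T f) (LocalizedModule.map T g) :=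
  LocalizedModule.map_exact T f g hfg

theorem localizedModule_map_shortExact (hf : Function.Injective f) (hfg : Function.Exact f g)
    (hg : Function.Surjective g) :
    (ModuleCat.shortComplexOfCompEqZero (LocalizedModule.map T f) (LocalizedModule.map T g)
      (localizedModule_map_exact T hfg).linearMap_comp_eq_zero).ShortExact :=
  ModuleCat.shortComplex_shortExact _ (localizedModule_map_exact T hfg)
    (LocalizedModule.map_injective T f hf) (LocalizedModule.map_surjective T g hg)

end LocalizedExact

section LocallyFree

variable {R : Type u} [CommRing R] (T : Submonoid R) {C : Type u} [AddCommGroup C] [Module R C]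
  {j : R →ₗ[R] C} {j' : C →ₗ[R] R} {t : R} (ht : t ∈ T) (hj : j' ∘ₗ j = t • LinearMap.id)
  (hj' : j ∘ₗ j' = t • LinearMap.id)
include ht hj hj'

theorem projective_localizedModule_tensorProduct (P : Type*) [AddCommGroup P] [Module R P]
    [Module.Projective R P] :
    Module.Projective (Localization T) (LocalizedModule T (C ⊗[R] P)) := by
  obtain ⟨e⟩ := nonempty_localizedModule_equiv T (f := j.rTensor P) (g := j'.rTensor P) ht
    (by rw [← LinearMap.rTensor_comp, hj, LinearMap.rTensor_smul, LinearMap.rTensor_id])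
    (by rw [← LinearMap.rTensor_comp, hj', LinearMap.rTensor_smul, LinearMap.rTensor_id])
  exact Module.Projective.of_equiv e

theorem injective_localizedModule_hom [IsNoetherianRing R] (I : Type u) [AddCommGroup I]
    [Module R I] [Module.Injective R I] :
    Module.Injective (Localization T) (LocalizedModule T (C →ₗ[R] I)) := by
  have : Module.Injective (Localization T) (LocalizedModule T I) :=
    Module.injective_of_isLocalizedModule T (LocalizedModule.mkLinearMap T I)
  let e₀ := LinearMap.ringLmapEquivSelf R R I
  obtain ⟨e⟩ := nonempty_localizedModule_equiv T
    (f := LinearMap.lcomp R I j' ∘ₗ e₀.symm.toLinearMap)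
    (g := e₀.toLinearMap ∘ₗ LinearMap.lcomp R I j) ht
    (LinearMap.ext fun x ↦ by
      have h : j' (j 1) = t • 1 := congr($hj 1)
      simp [e₀, h])
    (LinearMap.ext fun φ ↦ LinearMap.ext fun c ↦ by
      have h : j (j' c) = t • c := congr($hj' c)
      simp only [LinearMap.comp_apply, LinearEquiv.coe_coe, e₀.symm_apply_apply,
        LinearMap.lcomp_apply, h, map_smul, LinearMap.smul_apply, LinearMap.id_apply])
  exact (Module.Baer.of_equiv e (Module.Baer.of_injective inferInstance)).injective

end LocallyFree

section LocalizedDimension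

variable {R C M : Type} [CommRing R] [AddCommGroup C] [Module R C] (T : Submonoid R)
  {j : R →ₗ[R] C} {j' : C →ₗ[R] R} {t : R} (ht : t ∈ T) (hj : j' ∘ₗ j = t • LinearMap.id)
  (hj' : j ∘ₗ j' = t • LinearMap.id) {n : ℕ} {iM : AddCommGroup M} {jM : Module R M}
include ht hj hj'

theorem CpdLE.hasProjectiveDimensionLT_localizedModule (h : CpdLE R C n M iM jM) :
    HasProjectiveDimensionLT (ModuleCat.of (Localization T) (LocalizedModule T M)) (n + 1) := by
  induction n generalizing M with
  | zero =>
    obtain ⟨P, _, _, _, ⟨e⟩⟩ := h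
    have := projective_localizedModule_tensorProduct T ht hj hj' P
    obtain ⟨e'⟩ := nonempty_localizedModule_equiv T (f := e.toLinearMap) (g := e.symm.toLinearMap)
      T.one_mem (by ext; simp) (by ext; simp)
    have := (IsProjective.iff_projective (LocalizedModule T M)).1 (.of_equiv e')
    exact inferInstance
  | succ n ih =>
    obtain ⟨P, _, _, f, _, hf, hK⟩ := h
    have := projective_localizedModule_tensorProduct T ht hj hj' P
    have := (IsProjective.iff_projective (LocalizedModule T (C ⊗[R] P))).1 this
    exact (localizedModule_map_shortExact T f.ker.injective_subtype f.exact_subtype_ker_map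
      hf).hasProjectiveDimensionLT_X₃ (n + 1) (ih hK)
        (hasProjectiveDimensionLT_of_ge _ 1 _ (by lia))

theorem CidLE.hasInjectiveDimensionLT_localizedModule [IsNoetherianRing R]
    (h : CidLE R C n M iM jM) :
    HasInjectiveDimensionLT (ModuleCat.of (Localization T) (LocalizedModule T M)) (n + 1) := by
  induction n generalizing M with
  | zero =>
    obtain ⟨I, _, _, _, ⟨e⟩⟩ := h
    have := injective_localizedModule_hom T ht hj hj' I
    obtain ⟨e'⟩ := nonempty_localizedModule_equiv T (f := e.toLinearMap) (g := e.symm.toLinearMap)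
      T.one_mem (by ext; simp) (by ext; simp)
    have := (Module.Baer.of_equiv e'.symm (Module.Baer.of_injective ‹_›)).injective
    have := Module.injective_object_of_injective_module (Localization T) (LocalizedModule T M)
    exact inferInstance
  | succ n ih =>
    obtain ⟨I, _, _, f, _, hf, hQ⟩ := h
    have := injective_localizedModule_hom T ht hj hj' I
    have := Module.injective_object_of_injective_module (Localization T)
      (LocalizedModule T (C →ₗ[R] I))
    exact (localizedModule_map_shortExact T hf f.exact_map_mkQ_range
      f.range.mkQ_surjective).hasInjectiveDimensionLT_X₁ (n + 1) (ih hQ)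
        (hasInjectiveDimensionLT_of_ge _ 1 _ (by lia))

end LocalizedDimension

/-- **Main theorem.** Let `R` be a commutative noetherian ring, `C` a semidualizing `R`-module
and `M` a finitely generated `R`-module of finite `C`-projective dimension and finite
`C`-injective dimension. Then `R_p` is Gorenstein for every prime `p` in the support of `M`. -/
theorem main_theorem (R : Type) [CommRing R] [IsNoetherianRing R]
    (C : Type) [AddCommGroup C] [Module R C] (hC : IsSemidualizing R C)
    (M : Type) [AddCommGroup M] [Module R M] [Module.Finite R M]
    (hCpd : ∃ n : ℕ, CpdLE R C n M inferInstance inferInstance)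
    (hCid : ∃ n : ℕ, CidLE R C n M inferInstance inferInstance) :
    ∀ p ∈ Module.support R M, IsGorensteinRing (Localization.AtPrime p.asIdeal) := by
  intro p hp
  obtain ⟨n, hn⟩ := hCpd
  obtain ⟨n', hn'⟩ := hCid
  have := hC.1
  obtain ⟨P, _, _, f, hf⟩ := hn.exists_surjective
  have hunit := (hn'.subsingleton_ext_characterModule_and_tensorHomUnit_bijective hC).2
  obtain ⟨c₀, s, hs, h⟩ := exists_smul_eq_smul_of_tensorHomUnit_surjective hunit.2 hf hp
  obtain ⟨j, j', hj, hj'⟩ := exists_comp_eq_smul_id hC.2.1.1 h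
  let T := p.asIdeal.primeCompl
  have ht : s * s ∈ T := T.mul_mem hs hs
  have := hn.hasProjectiveDimensionLT_localizedModule T ht hj hj'
  have := hn'.hasInjectiveDimensionLT_localizedModule T ht hj hj'
  have : IsNoetherianRing (Localization.AtPrime p.asIdeal) :=
    IsLocalization.isNoetherianRing T _ inferInstance
  have : Module.Finite (Localization.AtPrime p.asIdeal) (LocalizedModule T M) :=
    Module.Finite.of_isLocalizedModule T (LocalizedModule.mkLinearMap T M)
  have : Nontrivial (LocalizedModule T M) := Module.mem_support_iff.1 hp
  refine ⟨n' + 1, idLE_self_of_subsingleton_ext_residueField fun i hi ↦ ?_⟩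
  have := HasInjectiveDimensionLT.subsingleton
    (ModuleCat.of (Localization.AtPrime p.asIdeal) (LocalizedModule T M)) (n' + 1) i hi
  exact subsingleton_ext_residueField_self (M := ModuleCat.of _ (LocalizedModule T M)) (n := n + 1)
end
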